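/- arXiv:2305.05045 — 2 statements merged into one kernel-verified Lean document; each statement's English description precedes it below -/
import Mathlib

section
/- Every connected graph G on n ≥ 2 vertices satisfies Gal(G) ≤ 5·n^{2/3}, i.e., there is a set of at most 5·n^{2/3} vertices that meets every longest path of G. -/
/-!
Any two longest paths of a connected graph meet. Let `n < d ^ 2`, and suppose that no `9 d` vertices
meet all longest paths. Choose two consecutive stretches of a longest path such that the longest
paths meeting either one can only be met by many vertices; deleting fewer than `2 d` vertices and a
buffer at the junction leaves the stretches connected. Layers of distance from the first stretch
therefore have at least `2 d` vertices until the second one is reached, so a walk of length at most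
`n / (2 d)` joins them around the buffer. Closing it up along the path gives a cycle `c` such that
the longest paths meeting `c` can be met by `9 d` vertices but not by `2 d - 1`.

Some longest path `p` then misses `c`. Cut `p` into at most `d` blocks of at most `d` vertices. Two
disjoint paths from one block to `c`, joined along the longer arc of `c`, would lengthen `p`, so by
Menger's theorem a single vertex separates each block from `c`. Every longest path meeting `c` also
meets `p`, hence contains one of these at most `d` vertices: a contradiction.
-/

namespace GallaiNumber

open SimpleGraph

variable {V : Type*} {G : SimpleGraph V} {u v w x y : V} {A B : Set V}

section Paths

theorem start_notMem_tail_support {p : G.Walk u v} (hp : p.IsPath) : u ∉ p.support.tail := by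
  have hnodup := p.isPath_def.1 hp
  rw [← p.cons_tail_support, List.nodup_cons] at hnodup
  exact hnodup.1

theorem isPath_append {p : G.Walk u v} {q : G.Walk v w} (hp : p.IsPath) (hq : q.IsPath)
    (h : ∀ z ∈ p.support, z ∈ q.support → z = v) : (p.append q).IsPath := by
  rw [Walk.isPath_def, Walk.support_append, List.nodup_append']
  refine ⟨p.isPath_def.1 hp, (q.isPath_def.1 hq).tail, fun z hzp hzq => ?_⟩
  exact start_notMem_tail_support hq (h z hzp (List.mem_of_mem_tail hzq) ▸ hzq)

theorem exists_walk_support_subset (p : G.Walk u v) (hx : x ∈ p.support) (hy : y ∈ p.support) :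
    ∃ q : G.Walk x y, q.support ⊆ p.support := by
  classical
  refine ⟨(p.takeUntil x hx).reverse.append (p.takeUntil y hy), fun z hz => ?_⟩
  rw [Walk.mem_support_append_iff, Walk.support_reverse, List.mem_reverse] at hz
  exact hz.elim (p.support_takeUntil_subset_support hx ·)
    (p.support_takeUntil_subset_support hy ·)

theorem exists_walk_to_first_mem (p : G.Walk u v) (h : ∃ z ∈ p.support, z ∈ B) :
    ∃ b ∈ B, ∃ q : G.Walk u b, q.support ⊆ p.support ∧ (p.IsPath → q.IsPath) ∧
      ∀ z ∈ q.support, z ∈ B → z = b := by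
  classical
  obtain ⟨z, hz, hzB⟩ := h
  obtain ⟨b, hbB, hb, hfirst⟩ := p.exists_mem_support_forall_mem_support_imp_eq
    (p.support.toFinset.filter (· ∈ B)) ⟨z, by simp [hz, hzB]⟩
  have hsub := p.support_takeUntil_subset_support hb
  refine ⟨b, (Finset.mem_filter.1 hbB).2, p.takeUntil b hb, hsub, fun hp => hp.takeUntil hb,
    fun t ht htB => hfirst t ?_ ht⟩
  simp [hsub ht, htB]

theorem exists_walk_from_last_mem (p : G.Walk u v) (h : ∃ z ∈ p.support, z ∈ A) :
    ∃ a ∈ A, ∃ q : G.Walk a v, q.support ⊆ p.support ∧ (p.IsPath → q.IsPath) ∧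
      ∀ z ∈ q.support, z ∈ A → z = a := by
  obtain ⟨a, ha, q, hsub, hpath, hlast⟩ := exists_walk_to_first_mem (B := A) p.reverse
    (by simpa using h)
  refine ⟨a, ha, q.reverse, ?_, fun hp => (hpath hp.reverse).reverse, ?_⟩
  · simpa using hsub
  · simpa using hlast

/-- An `A`–`B` path in the sense of Diestel: a path from `A` to `B` with no other vertex in
`A ∪ B`. -/
structure IsPathBetween (A B : Set V) (p : G.Walk u v) : Prop where
  isPath : p.IsPath
  left_mem : u ∈ A
  right_mem : v ∈ B
  eq_left : ∀ z ∈ p.support, z ∈ A → z = u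
  eq_right : ∀ z ∈ p.support, z ∈ B → z = v

theorem exists_isPathBetween (p : G.Walk u v) (hA : ∃ z ∈ p.support, z ∈ A)
    (hB : ∃ z ∈ p.support, z ∈ B) :
    ∃ (a b : V) (q : G.Walk a b), IsPathBetween A B q ∧ q.support ⊆ p.support := by
  classical
  obtain ⟨a, ha, haA⟩ := hA
  obtain ⟨b, hb, hbB⟩ := hB
  obtain ⟨r, hr⟩ := exists_walk_support_subset p ha hb
  obtain ⟨b', hb', q₁, hq₁, hpath₁, hfirst⟩ :=
    exists_walk_to_first_mem r.bypass ⟨b, Walk.end_mem_support _, hbB⟩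
  obtain ⟨a', ha', q₂, hq₂, hpath₂, hlast⟩ :=
    exists_walk_from_last_mem q₁ ⟨a, Walk.start_mem_support _, haA⟩
  exact ⟨a', b', q₂, ⟨hpath₂ (hpath₁ r.bypass_isPath), ha', hb', hlast,
    fun z hz => hfirst z (hq₂ hz)⟩,
    fun z hz => hr (r.support_bypass_subset_support (hq₁ (hq₂ hz)))⟩

theorem exists_isPath_half {p : G.Walk u v} (hp : p.IsPath) (hx : x ∈ p.support) :
    ∃ (y : V) (q : G.Walk x y), q.IsPath ∧ q.support ⊆ p.support ∧ p.length ≤ 2 * q.length := by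
  classical
  have hlen : p.length = (p.takeUntil x hx).length + (p.dropUntil x hx).length := by
    rw [← Walk.length_append, Walk.take_spec]
  rcases le_total (p.takeUntil x hx).length (p.dropUntil x hx).length with h | h
  · exact ⟨v, p.dropUntil x hx, hp.dropUntil hx, p.support_dropUntil_subset_support hx, by lia⟩
  · refine ⟨u, (p.takeUntil x hx).reverse, (hp.takeUntil hx).reverse, ?_, ?_⟩
    · simpa using p.support_takeUntil_subset_support hx
    · rw [Walk.length_reverse]; lia

theorem exists_isPath_long_arc {c : G.Walk w w} (hc : c.IsCycle) (hx : x ∈ c.support)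
    (hy : y ∈ c.support) (hxy : x ≠ y) :
    ∃ q : G.Walk x y, q.IsPath ∧ q.support ⊆ c.support ∧ c.length ≤ 2 * q.length := by
  classical
  have hy' : y ∈ (c.rotate x hx).support := (c.mem_support_rotate_iff x hx).2 hy
  have hsub : (c.rotate x hx).support ⊆ c.support := fun z => (c.mem_support_rotate_iff x hx).1
  set r := c.rotate x hx with hr
  have hcycle : r.IsCycle := hc.rotate hx
  have hlen : c.length = (r.takeUntil y hy').length + (r.dropUntil y hy').length := by
    rw [← Walk.length_append, Walk.take_spec, hr, c.length_rotate]
  rcases le_total (r.takeUntil y hy').length (r.dropUntil y hy').length with h | h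
  · have hpath : (r.dropUntil y hy').IsPath :=
      Walk.IsCycle.isPath_of_append_right (p := r.takeUntil y hy') (Walk.not_nil_of_ne hxy)
        (by rwa [Walk.take_spec])
    refine ⟨(r.dropUntil y hy').reverse, hpath.reverse, ?_, ?_⟩
    · rw [Walk.support_reverse, List.reverse_subset]
      exact List.Subset.trans (r.support_dropUntil_subset_support hy') hsub
    · rw [Walk.length_reverse]; lia
  · exact ⟨r.takeUntil y hy', hcycle.isPath_takeUntil hy',
      List.Subset.trans (r.support_takeUntil_subset_support hy') hsub, by lia⟩

end Paths

section LongestPaths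

/-- A longest path of `G`, measured by its number of edges. -/
def IsLongestPath (p : G.Walk u v) : Prop :=
  p.IsPath ∧ ∀ (x y : V) (q : G.Walk x y), q.IsPath → q.length ≤ p.length

theorem IsLongestPath.exists_mem_support (hG : G.Preconnected) {p : G.Walk u v} {q : G.Walk x y}
    (hp : IsLongestPath p) (hq : IsLongestPath q) : ∃ z ∈ p.support, z ∈ q.support := by
  by_contra! hdisj
  obtain ⟨a, b, r, hr, -⟩ := exists_isPathBetween (A := {z | z ∈ p.support})
    (B := {z | z ∈ q.support}) (hG u x).some
    ⟨u, Walk.start_mem_support _, p.start_mem_support⟩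
    ⟨x, Walk.end_mem_support _, q.start_mem_support⟩
  obtain ⟨s, p', hp', hp'sub, hp'len⟩ := exists_isPath_half hp.1 hr.left_mem
  obtain ⟨t, q', hq', hq'sub, hq'len⟩ := exists_isPath_half hq.1 hr.right_mem
  have hrq : (r.append q').IsPath :=
    isPath_append hr.isPath hq' fun z hz hzq => hr.eq_right z hz (hq'sub hzq)
  have hprq : (p'.reverse.append (r.append q')).IsPath := by
    refine isPath_append hp'.reverse hrq fun z hzp hz => ?_
    rw [Walk.support_reverse, List.mem_reverse] at hzp
    rcases (Walk.mem_support_append_iff _ _).1 hz with hz | hz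
    · exact hr.eq_left z hz (hp'sub hzp)
    · exact absurd (hq'sub hz) (hdisj z (hp'sub hzp))
  have hr_pos : r.length ≠ 0 := fun h => by
    obtain rfl := Walk.eq_of_length_eq_zero h
    exact hdisj a hr.left_mem hr.right_mem
  have hlong := hp.2 _ _ _ hprq
  have hpq := hq.2 _ _ p hp.1
  simp only [Walk.length_append, Walk.length_reverse] at hlong
  lia

theorem IsLongestPath.length_le_of_detour {p : G.Walk u v} (hp : IsLongestPath p) {i j : ℕ}
    (hij : i ≤ j) (hj : j ≤ p.length) {q : G.Walk (p.getVert i) (p.getVert j)} (hq : q.IsPath)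
    (hpq : ∀ z ∈ q.support, z ∈ p.support → z = p.getVert i ∨ z = p.getVert j) :
    q.length ≤ j - i := by
  have hinj := hp.1.getVert_injOn
  have mem_take {z} (hz : z ∈ (p.take i).support) : ∃ k ≤ i, p.getVert k = z := by
    obtain ⟨k, rfl, -⟩ := Walk.mem_support_iff_exists_getVert.1 hz
    exact ⟨min i k, min_le_left _ _, (p.take_getVert i k).symm⟩
  have mem_drop {z} (hz : z ∈ (p.drop j).support) :
      ∃ k, j ≤ k ∧ k ≤ p.length ∧ p.getVert k = z := by
    obtain ⟨k, rfl, hk⟩ := Walk.mem_support_iff_exists_getVert.1 hz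
    rw [p.drop_length] at hk
    exact ⟨j + k, by lia, by lia, (p.drop_getVert j k).symm⟩
  have hqd : (q.append (p.drop j)).IsPath := by
    refine isPath_append hq (hp.1.drop j) fun z hzq hzp => ?_
    obtain ⟨k, hjk, hk, rfl⟩ := mem_drop hzp
    rcases hpq _ hzq (p.getVert_mem_support k) with h | h
    · have := hinj hk (hij.trans hj) h
      rw [show k = j by lia]
    · exact h
  have hpath : ((p.take i).append (q.append (p.drop j))).IsPath := by
    refine isPath_append (hp.1.take i) hqd fun z hzp hz => ?_
    obtain ⟨k, hki, rfl⟩ := mem_take hzp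
    rcases (Walk.mem_support_append_iff _ _).1 hz with hz | hz
    · rcases hpq _ hz (p.getVert_mem_support k) with h | h
      · exact h
      · have := hinj (show k ≤ p.length by lia) hj h
        rw [show k = i by lia]
    · obtain ⟨l, hjl, hl, h⟩ := mem_drop hz
      have := hinj hl (show k ≤ p.length by lia) h
      rw [show k = i by lia]
  have hlong := hp.2 _ _ _ hpath
  simp only [Walk.length_append, p.take_length, p.drop_length] at hlong
  lia

end LongestPaths

section DisjointPaths

/-- Two vertex-disjoint walks from `A`, one ending at `v` and the other in `B`: the notion that is
carried along an `A`–`B` walk in the proof of Menger's theorem for two paths. -/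
def HasDisjointWalks (G : SimpleGraph V) (A B : Set V) (v : V) : Prop :=
  ∃ a₁ ∈ A, ∃ a₂ ∈ A, ∃ b ∈ B, ∃ (p₁ : G.Walk a₁ v) (p₂ : G.Walk a₂ b),
    p₁.support.Disjoint p₂.support

theorem hasDisjointWalks_of_isPath {a₁ a₂ a b : V} (ha₁ : a₁ ∈ A) (ha₂ : a₂ ∈ A) (ha : a ∈ A)
    (hb : b ∈ B) {p : G.Walk a₁ w} {q : G.Walk a₂ w} (hp : p.IsPath) (hq : q.IsPath)
    (hpq : ∀ z ∈ p.support, z ∈ q.support → z = w) {r : G.Walk a b} (hr : w ∉ r.support) :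
    HasDisjointWalks G A B w := by
  classical
  by_cases hmeet : ∃ z ∈ r.support, z ∈ {z | z ∈ p.support ∨ z ∈ q.support}
  swap
  · exact ⟨a₁, ha₁, a, ha, b, hb, p, r, fun z hzp hzr => hmeet ⟨z, hzr, Or.inl hzp⟩⟩
  obtain ⟨z, hz, s, hsr, -, hlast⟩ := exists_walk_from_last_mem r hmeet
  wlog hzq : z ∈ q.support generalizing p q a₁ a₂
  · exact this ha₂ ha₁ hq hp (fun t htq htp => hpq t htp htq)
      (by simpa only [or_comm] using hmeet) hz.symm
      (by simpa only [or_comm] using hlast) (hz.resolve_right hzq)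
  have hzw : z ≠ w := fun h => hr (hsr (h ▸ s.start_mem_support))
  refine ⟨a₁, ha₁, a₂, ha₂, b, hb, p, (q.takeUntil z hzq).append s, fun t htp ht => ?_⟩
  rcases (Walk.mem_support_append_iff _ _).1 ht with ht | ht
  · obtain rfl := hpq t htp (q.support_takeUntil_subset_support hzq ht)
    exact Walk.endpoint_notMem_support_takeUntil hq hzq hzw.symm ht
  · obtain rfl := hlast t ht (Or.inl htp)
    exact hzw (hpq t htp hzq)

theorem HasDisjointWalks.of_adj (hvw : G.Adj v w)
    (hw : ∃ a ∈ A, ∃ b ∈ B, ∃ p : G.Walk a b, w ∉ p.support) (h : HasDisjointWalks G A B v) :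
    HasDisjointWalks G A B w := by
  classical
  obtain ⟨a₁, ha₁, a₂, ha₂, b, hb, p₁, p₂, hdisj⟩ := h
  by_cases hw₂ : w ∈ p₂.support
  swap
  · refine ⟨a₁, ha₁, a₂, ha₂, b, hb, p₁.concat hvw, p₂, ?_⟩
    simpa [Walk.support_concat, hw₂] using hdisj
  obtain ⟨a, ha, b', hb', r, hwr⟩ := hw
  have hp₁ : p₁.bypass.support ⊆ p₁.support := p₁.support_bypass_subset_support
  have hw₁ : w ∉ p₁.bypass.support := fun h => hdisj (hp₁ h) hw₂
  refine hasDisjointWalks_of_isPath ha₁ ha₂ ha hb' (p₁.bypass_isPath.concat hw₁ hvw)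
    (p₂.takeUntil w hw₂).bypass_isPath (fun z hz hz₂ => ?_) hwr
  rw [Walk.support_concat, List.mem_append, List.mem_singleton] at hz
  refine hz.resolve_left fun hz => hdisj (hp₁ hz) ?_
  exact p₂.support_takeUntil_subset_support hw₂ (Walk.support_bypass_subset_support _ hz₂)

theorem exists_disjoint_walks [Nonempty V]
    (h : ∀ z, ∃ a ∈ A, ∃ b ∈ B, ∃ p : G.Walk a b, z ∉ p.support) :
    ∃ a₁ ∈ A, ∃ a₂ ∈ A, ∃ b₁ ∈ B, ∃ b₂ ∈ B, ∃ (p₁ : G.Walk a₁ b₁) (p₂ : G.Walk a₂ b₂),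
      p₁.support.Disjoint p₂.support := by
  have of_walk {u v : V} (p : G.Walk u v) (hu : HasDisjointWalks G A B u) :
      HasDisjointWalks G A B v := by
    induction p with
    | nil => exact hu
    | cons hadj _ ih => exact ih (hu.of_adj hadj (h _))
  obtain ⟨a, ha, b, hb, p, -⟩ := h (Classical.arbitrary V)
  have hstart : HasDisjointWalks G A B a := by
    obtain ⟨a', ha', b', hb', q, haq⟩ := h a
    exact ⟨a, ha, a', ha', b', hb', .nil, q, by simpa using haq⟩
  obtain ⟨a₁, ha₁, a₂, ha₂, b₂, hb₂, p₁, p₂, hdisj⟩ := of_walk p hstart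
  exact ⟨a₁, ha₁, a₂, ha₂, b, hb, b₂, hb₂, p₁, p₂, hdisj⟩

theorem mem_support_map_induce {S : Set V} {a b : S} {p : (G.induce S).Walk a b} {z : V} :
    z ∈ (p.map (Embedding.induce S).toHom).support ↔ ∃ hz : z ∈ S, ⟨z, hz⟩ ∈ p.support := by
  rw [Walk.support_map, List.mem_map]
  constructor
  · rintro ⟨t, ht, rfl⟩
    exact ⟨t.2, ht⟩
  · rintro ⟨hz, ht⟩
    exact ⟨_, ht, rfl⟩

theorem exists_disjoint_walks_within [Nonempty V] {S : Set V}
    (h : ∀ z, ∃ a ∈ A, ∃ b ∈ B, ∃ p : G.Walk a b, (∀ t ∈ p.support, t ∈ S) ∧ z ∉ p.support) :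
    ∃ a₁ ∈ A, ∃ a₂ ∈ A, ∃ b₁ ∈ B, ∃ b₂ ∈ B, ∃ (p₁ : G.Walk a₁ b₁) (p₂ : G.Walk a₂ b₂),
      (∀ t ∈ p₁.support, t ∈ S) ∧ (∀ t ∈ p₂.support, t ∈ S) ∧
        p₁.support.Disjoint p₂.support := by
  have : Nonempty S := by
    obtain ⟨a, -, b, -, p, hpS, -⟩ := h (Classical.arbitrary V)
    exact ⟨a, hpS a p.start_mem_support⟩
  obtain ⟨a₁, ha₁, a₂, ha₂, b₁, hb₁, b₂, hb₂, p₁, p₂, hdisj⟩ :=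
    exists_disjoint_walks (G := G.induce S) (A := Subtype.val ⁻¹' A) (B := Subtype.val ⁻¹' B)
      fun z => by
        obtain ⟨a, ha, b, hb, p, hpS, hz⟩ := h z
        exact ⟨_, ha, _, hb, p.induce S hpS, by simpa [Walk.support_induce] using hz⟩
  refine ⟨a₁, ha₁, a₂, ha₂, b₁, hb₁, b₂, hb₂, p₁.map (Embedding.induce S).toHom,
    p₂.map (Embedding.induce S).toHom, fun t ht => ?_, fun t ht => ?_, fun t ht₁ ht₂ => ?_⟩
  · exact (mem_support_map_induce.1 ht).1
  · exact (mem_support_map_induce.1 ht).1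
  · obtain ⟨_, ht₁⟩ := mem_support_map_induce.1 ht₁
    obtain ⟨_, ht₂⟩ := mem_support_map_induce.1 ht₂
    exact hdisj ht₁ ht₂

end DisjointPaths

section CycleSeparator

theorem IsPathBetween.length_pos {p : G.Walk u v} (hp : IsPathBetween A B p)
    (hAB : Disjoint A B) : 0 < p.length := by
  refine Nat.pos_of_ne_zero fun h => ?_
  obtain rfl := Walk.eq_of_length_eq_zero h
  exact Set.disjoint_left.1 hAB hp.left_mem hp.right_mem

theorem IsLongestPath.cycle_length_lt {p : G.Walk u v} (hp : IsLongestPath p) {c : G.Walk w w}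
    (hc : c.IsCycle) (hpc : Disjoint {z | z ∈ p.support} {z | z ∈ c.support}) {i j : ℕ}
    (hij : i ≤ j) (hj : j ≤ p.length) {r : G.Walk (p.getVert i) x} {s : G.Walk (p.getVert j) y}
    (hr : IsPathBetween {z | z ∈ p.support} {z | z ∈ c.support} r)
    (hs : IsPathBetween {z | z ∈ p.support} {z | z ∈ c.support} s)
    (hrs : r.support.Disjoint s.support) : c.length < 2 * (j - i) := by
  have hxy : x ≠ y := fun h => hrs r.end_mem_support (h ▸ s.end_mem_support)
  obtain ⟨q, hq, hqc, hqlen⟩ := exists_isPath_long_arc hc hr.right_mem hs.right_mem hxy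
  have hqs : (q.append s.reverse).IsPath := by
    refine isPath_append hq hs.isPath.reverse fun z hzq hzs => hs.eq_right z ?_ (hqc hzq)
    simpa using hzs
  have hrqs : (r.append (q.append s.reverse)).IsPath := by
    refine isPath_append hr.isPath hqs fun z hzr hz => ?_
    rcases (Walk.mem_support_append_iff _ _).1 hz with hz | hz
    · exact hr.eq_right z hzr (hqc hz)
    · exact absurd (by simpa using hz) (hrs hzr)
  have hlen := hp.length_le_of_detour hij hj hrqs fun z hz hzp => by
    simp only [Walk.mem_support_append_iff, Walk.support_reverse, List.mem_reverse] at hz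
    rcases hz with hz | hz | hz
    · exact Or.inl (hr.eq_left z hz hzp)
    · exact (Set.disjoint_left.1 hpc hzp (hqc hz)).elim
    · exact Or.inr (hs.eq_left z hz hzp)
  have := hr.length_pos hpc
  simp only [Walk.length_append, Walk.length_reverse] at hlen
  lia

theorem IsLongestPath.exists_separator {p : G.Walk u v} (hp : IsLongestPath p)
    {c : G.Walk w w} (hc : c.IsCycle) (hpc : Disjoint {z | z ∈ p.support} {z | z ∈ c.support})
    {J : Set V} (hJ : ∀ i ≤ p.length, ∀ j ≤ p.length, p.getVert i ∈ J →
      p.getVert j ∈ J → 2 * (j - i) ≤ c.length) :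
    ∃ z, ∀ (a b : V) (q : G.Walk a b), a ∈ p.support → b ∈ c.support →
      (∀ t ∈ q.support, t ∈ p.support → t ∈ J) → z ∈ q.support := by
  by_contra! hsep
  have : Nonempty V := ⟨u⟩
  obtain ⟨a₁, ha₁, a₂, ha₂, b₁, hb₁, b₂, hb₂, q₁, q₂, hq₁, hq₂, hdisj⟩ :=
    exists_disjoint_walks_within (G := G) (A := {z | z ∈ p.support}) (B := {z | z ∈ c.support})
      (S := {t | t ∈ p.support → t ∈ J}) fun z => by
        obtain ⟨a, b, q, ha, hb, hqJ, hz⟩ := hsep z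
        exact ⟨a, ha, b, hb, q, hqJ, hz⟩
  obtain ⟨s₁, t₁, r₁, hr₁, hrq₁⟩ := exists_isPathBetween (A := {z | z ∈ p.support})
    (B := {z | z ∈ c.support}) q₁ ⟨a₁, q₁.start_mem_support, ha₁⟩ ⟨b₁, q₁.end_mem_support, hb₁⟩
  obtain ⟨s₂, t₂, r₂, hr₂, hrq₂⟩ := exists_isPathBetween (A := {z | z ∈ p.support})
    (B := {z | z ∈ c.support}) q₂ ⟨a₂, q₂.start_mem_support, ha₂⟩ ⟨b₂, q₂.end_mem_support, hb₂⟩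
  have hrdisj : r₁.support.Disjoint r₂.support := fun z h₁ h₂ => hdisj (hrq₁ h₁) (hrq₂ h₂)
  have hs₁ : s₁ ∈ J := hq₁ s₁ (hrq₁ r₁.start_mem_support) hr₁.left_mem
  have hs₂ : s₂ ∈ J := hq₂ s₂ (hrq₂ r₂.start_mem_support) hr₂.left_mem
  obtain ⟨i, rfl, hi⟩ := Walk.mem_support_iff_exists_getVert.1 hr₁.left_mem
  obtain ⟨j, rfl, hj⟩ := Walk.mem_support_iff_exists_getVert.1 hr₂.left_mem
  rcases le_total i j with hij | hji
  · exact absurd (hp.cycle_length_lt hc hpc hij hj hr₁ hr₂ hrdisj)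
      (hJ i hi j hj hs₁ hs₂).not_gt
  · exact absurd (hp.cycle_length_lt hc hpc hji hi hr₂ hr₁ hrdisj.symm)
      (hJ j hj i hi hs₂ hs₁).not_gt

end CycleSeparator

section Transversals

/-- The longest paths of `G` that meet `A` can be met by at most `m` vertices. -/
def HasTransversal (G : SimpleGraph V) (A : Set V) (m : ℕ) : Prop :=
  ∃ X : Finset V, X.card ≤ m ∧ ∀ (x y : V) (p : G.Walk x y), IsLongestPath p →
    (∃ z ∈ p.support, z ∈ A) → ∃ z ∈ X, z ∈ p.support

variable {k m : ℕ}

theorem HasTransversal.mono (hAB : A ⊆ B) (hkm : k ≤ m) (hB : HasTransversal G B k) :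
    HasTransversal G A m := by
  obtain ⟨X, hX, h⟩ := hB
  exact ⟨X, hX.trans hkm, fun x y p hp ⟨z, hz, hzA⟩ => h x y p hp ⟨z, hz, hAB hzA⟩⟩

theorem HasTransversal.univ_of_forall_exists_mem
    (h : ∀ (x y : V) (p : G.Walk x y), IsLongestPath p → ∃ z ∈ p.support, z ∈ A)
    (hA : HasTransversal G A m) : HasTransversal G Set.univ m := by
  obtain ⟨X, hX, hXA⟩ := hA
  exact ⟨X, hX, fun x y p hp _ => hXA x y p hp (h x y p hp)⟩

theorem HasTransversal.union (hA : HasTransversal G A k) (hB : HasTransversal G B m) :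
    HasTransversal G (A ∪ B) (k + m) := by
  classical
  obtain ⟨X, hX, hXA⟩ := hA
  obtain ⟨Y, hY, hYB⟩ := hB
  refine ⟨X ∪ Y, (Finset.card_union_le X Y).trans (add_le_add hX hY), ?_⟩
  rintro x y p hp ⟨z, hz, hzA | hzB⟩
  · obtain ⟨t, ht, htp⟩ := hXA x y p hp ⟨z, hz, hzA⟩
    exact ⟨t, Finset.mem_union_left Y ht, htp⟩
  · obtain ⟨t, ht, htp⟩ := hYB x y p hp ⟨z, hz, hzB⟩
    exact ⟨t, Finset.mem_union_right X ht, htp⟩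

theorem hasTransversal_coe (X : Finset V) : HasTransversal G X X.card :=
  ⟨X, le_rfl, fun _ _ _ _ ⟨z, hz, hzX⟩ => ⟨z, hzX, hz⟩⟩

theorem hasTransversal_support (p : G.Walk u v) :
    HasTransversal G {z | z ∈ p.support} (p.length + 1) := by
  classical
  refine (hasTransversal_coe p.support.toFinset).mono (fun z hz => by simpa using hz) ?_
  exact p.length_support ▸ p.support.toFinset_card_le

theorem nonempty_of_not_hasTransversal (h : ¬HasTransversal G A m) : A.Nonempty := by
  by_contra hA
  rw [Set.not_nonempty_iff_eq_empty] at hA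
  exact h (by simpa [hA] using (hasTransversal_coe (G := G) ∅).mono subset_rfl m.zero_le)

theorem exists_isLongestPath_avoiding (hA : ¬HasTransversal G A m) {X : Finset V}
    (hX : X.card ≤ m) : ∃ (x y : V) (p : G.Walk x y), IsLongestPath p ∧
      (∃ z ∈ p.support, z ∈ A) ∧ ∀ z ∈ X, z ∉ p.support := by
  simp only [HasTransversal] at hA
  push Not at hA
  exact hA X hX

theorem exists_hasTransversal_succ {S : ℕ → Set V} {N : ℕ} (h₀ : S 0 = ∅)
    (hS : ∀ i, ∃ x, S (i + 1) ⊆ insert x (S i)) (hN : ¬HasTransversal G (S N) m) :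
    ∃ i ≤ N, ¬HasTransversal G (S i) m ∧ HasTransversal G (S i) (m + 1) := by
  classical
  have hex : ∃ i, ¬HasTransversal G (S i) m := ⟨N, hN⟩
  refine ⟨Nat.find hex, Nat.find_min' hex hN, Nat.find_spec hex, ?_⟩
  have hpos : Nat.find hex ≠ 0 := by
    rw [Ne, Nat.find_eq_zero, not_not, h₀]
    simpa using (hasTransversal_coe (G := G) ∅).mono subset_rfl (Nat.zero_le m)
  obtain ⟨i, hi⟩ := Nat.exists_eq_succ_of_ne_zero hpos
  have hprev : HasTransversal G (S i) m := not_not.1 (Nat.find_min hex (by lia))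
  obtain ⟨x, hx⟩ := hS i
  rw [hi]
  refine (hprev.union (hasTransversal_coe {x})).mono ?_ le_rfl
  rwa [Finset.coe_singleton, Set.union_singleton]

theorem exists_walk_avoiding (hG : G.Preconnected) (hA : ¬HasTransversal G A m)
    (hB : ¬HasTransversal G B m) {D : Set V} (hD : HasTransversal G D k) {X : Finset V}
    (hX : X.card + k ≤ m) :
    ∃ a ∈ A, ∃ b ∈ B, ∃ p : G.Walk a b, ∀ z ∈ p.support, z ∉ X ∧ z ∉ D := by
  classical
  obtain ⟨Y, hY, hYD⟩ := hD
  have hXY : (X ∪ Y).card ≤ m := (Finset.card_union_le X Y).trans (by lia)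
  have avoids {x y : V} {p : G.Walk x y} (hp : IsLongestPath p) (h : ∀ z ∈ X ∪ Y, z ∉ p.support)
      {z : V} (hz : z ∈ p.support) : z ∉ X ∧ z ∉ D := by
    refine ⟨fun hzX => h z (Finset.mem_union_left Y hzX) hz, fun hzD => ?_⟩
    obtain ⟨t, ht, htp⟩ := hYD x y p hp ⟨z, hz, hzD⟩
    exact h t (Finset.mem_union_right X ht) htp
  obtain ⟨_, _, p, hp, ⟨a, hap, ha⟩, hpXY⟩ := exists_isLongestPath_avoiding hA hXY
  obtain ⟨_, _, q, hq, ⟨b, hbq, hb⟩, hqXY⟩ := exists_isLongestPath_avoiding hB hXY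
  obtain ⟨z, hzp, hzq⟩ := hp.exists_mem_support hG hq
  obtain ⟨p', hp'⟩ := exists_walk_support_subset p hap hzp
  obtain ⟨q', hq'⟩ := exists_walk_support_subset q hzq hbq
  refine ⟨a, ha, b, hb, p'.append q', fun t ht => ?_⟩
  rcases (Walk.mem_support_append_iff _ _).1 ht with ht | ht
  · exact avoids hp hpXY (hp' ht)
  · exact avoids hq hqXY (hq' ht)

end Transversals

section ShortWalks

variable [Fintype V] {D : Set V} {i j k t : ℕ}

open Classical in
/-- The vertices reached from `A` by a walk with fewer than `i` edges that avoids `D`. -/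
noncomputable def walkBall (G : SimpleGraph V) (A D : Set V) (i : ℕ) : Finset V :=
  {v | ∃ a ∈ A, ∃ p : G.Walk a v, p.length < i ∧ ∀ z ∈ p.support, z ∉ D}

theorem mem_walkBall : v ∈ walkBall G A D i ↔
    ∃ a ∈ A, ∃ p : G.Walk a v, p.length < i ∧ ∀ z ∈ p.support, z ∉ D := by
  simp [walkBall]

theorem walkBall_mono (hij : i ≤ j) : walkBall G A D i ⊆ walkBall G A D j := fun v hv => by
  obtain ⟨a, ha, p, hp, hpD⟩ := mem_walkBall.1 hv
  exact mem_walkBall.2 ⟨a, ha, p, hp.trans_le hij, hpD⟩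

theorem exists_mem_walkBall_succ_sdiff [DecidableEq V] {p : G.Walk u v} (hu : u ∈ A)
    (hv : v ∉ walkBall G A D i) (hp : ∀ z ∈ p.support, z ∉ D) :
    ∃ z ∈ p.support, z ∈ walkBall G A D (i + 1) \ walkBall G A D i := by
  by_cases hui : u ∈ walkBall G A D i
  · obtain ⟨d, hd, hfst, hsnd⟩ := p.exists_boundary_dart (walkBall G A D i) hui hv
    have hdp := p.dart_snd_mem_support_of_mem_darts hd
    obtain ⟨a, ha, q, hq, hqD⟩ := mem_walkBall.1 hfst
    refine ⟨d.snd, hdp, Finset.mem_sdiff.2 ⟨mem_walkBall.2 ⟨a, ha, q.concat d.adj, ?_, ?_⟩, hsnd⟩⟩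
    · simpa using hq
    · simpa [Walk.support_concat, or_imp, forall_and] using And.intro hqD (hp _ hdp)
  · refine ⟨u, p.start_mem_support, Finset.mem_sdiff.2 ⟨mem_walkBall.2 ⟨u, hu, .nil, ?_⟩, hui⟩⟩
    simpa using hp u p.start_mem_support

-- The vertices gained from one ball to the next separate `A` from `B`, so there are at least `k`.
theorem exists_short_walk (hcard : Fintype.card V < t * k)
    (h : ∀ X : Finset V, X.card < k →
      ∃ a ∈ A, ∃ b ∈ B, ∃ p : G.Walk a b, ∀ z ∈ p.support, z ∉ X ∧ z ∉ D) :
    ∃ a ∈ A, ∃ b ∈ B, ∃ p : G.Walk a b, p.length < t ∧ ∀ z ∈ p.support, z ∉ D := by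
  classical
  by_contra! hlong
  have not_mem_ball {b : V} (hb : b ∈ B) : b ∉ walkBall G A D t := fun hbt => by
    obtain ⟨a, ha, p, hp, hpD⟩ := mem_walkBall.1 hbt
    obtain ⟨z, hz, hzD⟩ := hlong a ha b hb p hp
    exact hpD z hz hzD
  have card_step {i : ℕ} (hi : i < t) :
      k ≤ (walkBall G A D (i + 1) \ walkBall G A D i).card := by
    by_contra! hlt
    obtain ⟨a, ha, b, hb, p, hp⟩ := h _ hlt
    obtain ⟨z, hz, hzX⟩ := exists_mem_walkBall_succ_sdiff ha
      (fun hbi => not_mem_ball hb (walkBall_mono hi.le hbi)) fun z hz => (hp z hz).2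
    exact (hp z hz).1 hzX
  have card_ball {i : ℕ} (hi : i ≤ t) : i * k ≤ (walkBall G A D i).card := by
    induction i with
    | zero => simp
    | succ i ih =>
      rw [← Finset.card_sdiff_add_card_eq_card (walkBall_mono i.le_succ), add_one_mul, add_comm]
      exact add_le_add (card_step hi) (ih (by lia))
  exact absurd hcard ((card_ball le_rfl).trans (Finset.card_le_univ _)).not_gt

end ShortWalks

section CycleWithTransversal

theorem exists_isPath_segment {p : G.Walk u v} (hp : p.IsPath) {i j : ℕ} (hij : i ≤ j)
    (hj : j ≤ p.length) : ∃ q : G.Walk (p.getVert i) (p.getVert j), q.IsPath ∧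
      q.length = j - i ∧ {z | z ∈ q.support} = p.getVert '' Set.Icc i j := by
  refine ⟨((p.drop i).take (j - i)).copy rfl (by rw [p.drop_getVert, Nat.add_sub_cancel' hij]),
    ?_, ?_, ?_⟩
  · simpa using (hp.drop i).take (j - i)
  · rw [Walk.length_copy, Walk.take_length, Walk.drop_length]
    lia
  · ext z
    simp only [Walk.support_copy, Set.mem_ofPred_eq, Walk.mem_support_iff_exists_getVert,
      Walk.take_getVert, Walk.drop_getVert, Walk.take_length, Walk.drop_length, Set.mem_image,
      Set.mem_Icc]
    constructor
    · rintro ⟨l, rfl, -⟩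
      exact ⟨_, by lia, rfl⟩
    · rintro ⟨l, hl, rfl⟩
      exact ⟨l - i, by congr 1; lia, by lia⟩

theorem exists_isCycle_of_isPathBetween {p : G.Walk u v} (hp : p.IsPath) {n₀ n₁ n₂ : ℕ}
    (h₀₁ : n₀ < n₁) (h₂ : n₂ ≤ p.length + 1) {r : G.Walk x y}
    (hr : IsPathBetween (p.getVert '' Set.Ico 0 n₀) (p.getVert '' Set.Ico n₁ n₂) r)
    (hrp : ∀ z ∈ r.support, z ∉ p.getVert '' Set.Ico n₀ n₁) :
    ∃ c : G.Walk x x, c.IsCycle ∧ p.getVert '' Set.Ico n₀ n₁ ⊆ {z | z ∈ c.support} ∧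
      {z | z ∈ c.support} ⊆ p.getVert '' Set.Ico 0 n₂ ∪ {z | z ∈ r.support} := by
  obtain ⟨i, ⟨-, hi⟩, rfl⟩ := hr.left_mem
  obtain ⟨j, ⟨hj₁, hj₂⟩, rfl⟩ := hr.right_mem
  obtain ⟨q, hq, hqlen, hqsup⟩ := exists_isPath_segment hp (i := i) (j := j) (by lia) (by lia)
  have mem_q {z} : z ∈ q.support ↔ ∃ l ∈ Set.Icc i j, p.getVert l = z := by
    rw [← Set.mem_image, ← hqsup, Set.mem_ofPred_eq]
  have hmeet {z} (hzq : z ∈ q.support) (hzr : z ∈ r.support) :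
      z = p.getVert i ∨ z = p.getVert j := by
    obtain ⟨l, ⟨-, hlj⟩, rfl⟩ := mem_q.1 hzq
    rcases lt_or_ge l n₀ with hl₀ | hl₀
    · exact Or.inl (hr.eq_left _ hzr ⟨l, ⟨l.zero_le, hl₀⟩, rfl⟩)
    rcases lt_or_ge l n₁ with hl₁ | hl₁
    · exact absurd ⟨l, ⟨hl₀, hl₁⟩, rfl⟩ (hrp _ hzr)
    · exact Or.inr (hr.eq_right _ hzr ⟨l, ⟨hl₁, hlj.trans_lt hj₂⟩, rfl⟩)
  refine ⟨q.append r.reverse, hq.isCycle_append hr.isPath.reverse ?_ (Or.inl (by lia)), ?_, ?_⟩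
  · intro z hzq hzr
    rcases hmeet (List.mem_of_mem_tail hzq) (by simpa using List.mem_of_mem_tail hzr) with rfl | rfl
    · exact start_notMem_tail_support hq hzq
    · exact start_notMem_tail_support hr.isPath.reverse hzr
  · rintro _ ⟨l, ⟨hl₀, hl₁⟩, rfl⟩
    exact (Walk.mem_support_append_iff _ _).2 (Or.inl (mem_q.2 ⟨l, ⟨by lia, by lia⟩, rfl⟩))
  · intro z hz
    rcases (Walk.mem_support_append_iff _ _).1 hz with hz | hz
    · obtain ⟨l, ⟨-, hlj⟩, rfl⟩ := mem_q.1 hz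
      exact Or.inl ⟨l, ⟨l.zero_le, hlj.trans_lt hj₂⟩, rfl⟩
    · exact Or.inr (by simpa using hz)

variable {k m N : ℕ} {f : ℕ → V}

theorem exists_prefix_hasTransversal_succ {s : ℕ} (h : ¬HasTransversal G (f '' Set.Ico s N) m) :
    ∃ t ≤ N, ¬HasTransversal G (f '' Set.Ico s t) m ∧
      HasTransversal G (f '' Set.Ico s t) (m + 1) := by
  refine exists_hasTransversal_succ (S := fun t => f '' Set.Ico s t) (by simp)
    (fun i => ⟨f i, ?_⟩) h
  rintro _ ⟨l, ⟨hsl, hli⟩, rfl⟩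
  rcases (Nat.lt_succ_iff.1 hli).eq_or_lt with rfl | hli
  exacts [Or.inl rfl, Or.inr ⟨l, ⟨hsl, hli⟩, rfl⟩]

theorem exists_suffix_hasTransversal_succ {t : ℕ} (h : ¬HasTransversal G (f '' Set.Ico 0 t) m) :
    ∃ s, ¬HasTransversal G (f '' Set.Ico s t) m ∧
      HasTransversal G (f '' Set.Ico s t) (m + 1) := by
  have hstep (i : ℕ) : ∃ x, f '' Set.Ico (t - (i + 1)) t ⊆ insert x (f '' Set.Ico (t - i) t) := by
    refine ⟨f (t - (i + 1)), ?_⟩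
    rintro _ ⟨l, ⟨hil, hlt⟩, rfl⟩
    rcases hil.eq_or_lt with rfl | hil
    exacts [Or.inl rfl, Or.inr ⟨l, ⟨by lia, hlt⟩, rfl⟩]
  obtain ⟨i, -, hi⟩ := exists_hasTransversal_succ (S := fun i => f '' Set.Ico (t - i) t) (N := t)
    (by simp) hstep (by simpa using h)
  exact ⟨t - i, hi⟩

theorem exists_isCycle_hasTransversal [Fintype V] (hG : G.Preconnected) {p : G.Walk u v}
    (hp : p.IsPath) (hk : 0 < k) (h : ¬HasTransversal G {z | z ∈ p.support} (4 * k - 1)) :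
    ∃ (x : V) (c : G.Walk x x), c.IsCycle ∧ ¬HasTransversal G {z | z ∈ c.support} (k - 1) ∧
      HasTransversal G {z | z ∈ c.support} (4 * k + Fintype.card V / k + 1) := by
  have hsup : {z | z ∈ p.support} ⊆ p.getVert '' Set.Ico 0 (p.length + 1) := fun z hz => by
    obtain ⟨l, rfl, hl⟩ := Walk.mem_support_iff_exists_getVert.1 hz
    exact ⟨l, ⟨l.zero_le, Nat.lt_succ_of_le hl⟩, rfl⟩
  obtain ⟨n₁, hn₁, hA, hA'⟩ := exists_prefix_hasTransversal_succ (m := 2 * k - 1)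
    fun h' => h (h'.mono hsup (by lia))
  have hrest : ¬HasTransversal G (p.getVert '' Set.Ico n₁ (p.length + 1)) (2 * k - 1) :=
    fun h' => h ((hA'.union h').mono (by
      rwa [← Set.image_union, Set.Ico_union_Ico_eq_Ico n₁.zero_le hn₁]) (by lia))
  obtain ⟨n₂, hn₂, hB, hB'⟩ := exists_prefix_hasTransversal_succ hrest
  obtain ⟨n₀, hD, hD'⟩ := exists_suffix_hasTransversal_succ (m := k - 1)
    fun h' => hA (h'.mono subset_rfl (by lia))
  obtain ⟨_, l, ⟨hl₀, hl₁⟩, -⟩ := nonempty_of_not_hasTransversal hD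
  obtain ⟨a, ha, b, hb, w, hw, hwD⟩ := exists_short_walk (k := k)
    (t := Fintype.card V / k + 1) (mul_comm k _ ▸ Nat.lt_mul_div_succ _ hk) fun X hX =>
      exists_walk_avoiding hG hA hB hD' (X := X) (by lia)
  have ha₀ : a ∈ p.getVert '' Set.Ico 0 n₀ := by
    obtain ⟨i, ⟨-, hi⟩, rfl⟩ := ha
    refine ⟨i, ⟨i.zero_le, ?_⟩, rfl⟩
    by_contra! hi₀
    exact hwD _ w.start_mem_support ⟨i, ⟨hi₀, hi⟩, rfl⟩
  obtain ⟨x, y, r, hr, hrw⟩ := exists_isPathBetween w ⟨a, w.start_mem_support, ha₀⟩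
    ⟨b, w.end_mem_support, hb⟩
  obtain ⟨c, hc, hDc, hcr⟩ := exists_isCycle_of_isPathBetween hp (hl₀.trans_lt hl₁) hn₂ hr
    fun z hz => hwD z (hrw hz)
  refine ⟨x, c, hc, fun h' => hD (h'.mono hDc le_rfl), ?_⟩
  refine ((hA'.union hB').union (hasTransversal_support w)).mono (hcr.trans ?_) (by lia)
  rw [← Set.image_union]
  refine Set.union_subset_union (Set.image_mono fun i hi => ?_) fun z hz => hrw hz
  exact (lt_or_ge i n₁).imp (⟨i.zero_le, ·⟩) (⟨·, hi.2⟩)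

end CycleWithTransversal

section Main

variable {d : ℕ}

theorem IsLongestPath.hasTransversal_cycle (hG : G.Preconnected) {p : G.Walk u v}
    (hp : IsLongestPath p) {c : G.Walk w w} (hc : c.IsCycle)
    (hpc : Disjoint {z | z ∈ p.support} {z | z ∈ c.support}) (hd : 0 < d)
    (hdc : 2 * (d - 1) ≤ c.length) :
    HasTransversal G {z | z ∈ c.support} (p.length / d + 1) := by
  classical
  let block (b : ℕ) : Set V := p.getVert '' {i | i ≤ p.length ∧ i / d = b}
  have hblock (b : ℕ) : ∀ i ≤ p.length, ∀ j ≤ p.length, p.getVert i ∈ block b →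
      p.getVert j ∈ block b → 2 * (j - i) ≤ c.length := by
    rintro i hi j hj ⟨i', ⟨hi', hib⟩, hii'⟩ ⟨j', ⟨hj', hjb⟩, hjj'⟩
    obtain rfl := hp.1.getVert_injOn hi' hi hii'
    obtain rfl := hp.1.getVert_injOn hj' hj hjj'
    have hi_lower := Nat.div_mul_le_self i' d
    have hj_upper := Nat.lt_div_mul_add hd (a := j')
    rw [hib] at hi_lower
    rw [hjb] at hj_upper
    lia
  choose z hz using fun b => hp.exists_separator hc hpc (hblock b)
  refine ⟨(Finset.range (p.length / d + 1)).image z,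
    Finset.card_image_le.trans (Finset.card_range _).le, fun x y q hq ⟨t, htq, htc⟩ => ?_⟩
  obtain ⟨s, hsp, hsq⟩ := hp.exists_mem_support hG hq
  obtain ⟨a, b, r, hr, hrq⟩ := exists_isPathBetween (A := {z | z ∈ p.support}) q
    ⟨s, hsq, hsp⟩ ⟨t, htq, htc⟩
  obtain ⟨i, rfl, hi⟩ := Walk.mem_support_iff_exists_getVert.1 hr.left_mem
  refine ⟨z (i / d), Finset.mem_image_of_mem z ?_, hrq ?_⟩
  · exact Finset.mem_range_succ_iff.2 (Nat.div_le_div_right hi)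
  · refine hz (i / d) _ _ r hr.left_mem hr.right_mem fun t htr htp => ?_
    exact ⟨i, ⟨hi, rfl⟩, (hr.eq_left t htr htp).symm⟩

theorem hasTransversal_univ [Fintype V] (hG : G.Preconnected) (hd : Fintype.card V < d * d) :
    HasTransversal G Set.univ (9 * d) := by
  by_contra h
  have hd_pos : 0 < d := Nat.pos_of_mul_pos_left (Nat.zero_lt_of_lt hd)
  have hdiv (m : ℕ) (hm : m ≤ Fintype.card V) : m / d < d :=
    (Nat.div_lt_iff_lt_mul hd_pos).2 (hm.trans_lt hd)
  have hdiv' : Fintype.card V / (2 * d) < d :=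
    (Nat.div_le_div_left (by lia) hd_pos).trans_lt (hdiv _ le_rfl)
  obtain ⟨_, _, p, hp, -, -⟩ := exists_isLongestPath_avoiding h (X := ∅) (by simp)
  have hp_large : ¬HasTransversal G {z | z ∈ p.support} (4 * (2 * d) - 1) := fun h' =>
    h ((h'.mono subset_rfl (by lia)).univ_of_forall_exists_mem
      fun _ _ _ hq => hq.exists_mem_support hG hp)
  obtain ⟨_, c, hc, hc_large, hc_small⟩ :=
    exists_isCycle_hasTransversal hG hp.1 (by lia) hp_large
  have hc_len : 2 * (d - 1) ≤ c.length := by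
    by_contra! hlt
    exact hc_large ((hasTransversal_support c).mono subset_rfl (by lia))
  refine h ((hc_small.mono subset_rfl (by lia)).univ_of_forall_exists_mem
    fun _ _ q hq => ?_)
  by_contra! hdisj
  refine hc_large ((hq.hasTransversal_cycle hG hc (Set.disjoint_left.2 hdisj) hd_pos
    hc_len).mono subset_rfl ?_)
  have := hdiv q.length hq.1.length_lt.le
  lia

theorem min_le_five_mul_rpow (n : ℕ) :
    ((min n (9 * (n.sqrt + 1)) : ℕ) : ℝ) ≤ 5 * (n : ℝ) ^ ((2 : ℝ) / 3) := by
  have hn : (0 : ℝ) ≤ n := n.cast_nonneg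
  -- `t = n ^ (1 / 6)` turns the claim into `min (t ^ 6) (9 * (t ^ 3 + 1)) ≤ 5 * t ^ 4`.
  set t : ℝ := (n : ℝ) ^ ((1 : ℝ) / 6) with ht
  have ht_nonneg : 0 ≤ t := Real.rpow_nonneg hn _
  have ht_pow : (n : ℝ) = t ^ 6 := by
    rw [ht, ← Real.rpow_natCast, ← Real.rpow_mul hn]; norm_num
  have ht_rpow : (n : ℝ) ^ ((2 : ℝ) / 3) = t ^ 4 := by
    rw [ht, ← Real.rpow_natCast, ← Real.rpow_mul hn]; norm_num
  rw [ht_rpow, Nat.cast_min, min_le_iff]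
  rcases le_total (t ^ 2) 5 with h | h
  · left
    calc (n : ℝ) = t ^ 2 * t ^ 4 := by rw [ht_pow]; ring
      _ ≤ 5 * t ^ 4 := by gcongr
  · right
    have hsqrt : (n.sqrt : ℝ) ≤ t ^ 3 := by
      refine Real.nat_sqrt_le_real_sqrt.trans (Real.sqrt_le_iff.2 ⟨by positivity, ?_⟩)
      rw [ht_pow, ← pow_mul]
    have ht_lower : (11 : ℝ) / 5 ≤ t := by nlinarith
    have ht_cube : (5 : ℝ) ≤ t ^ 3 := by nlinarith
    calc ((9 * (n.sqrt + 1) : ℕ) : ℝ) ≤ 9 * (t ^ 3 + 1) := by push_cast; gcongr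
      _ ≤ 5 * (11 / 5 * t ^ 3) := by linarith
      _ ≤ 5 * (t * t ^ 3) := by gcongr
      _ = 5 * t ^ 4 := by ring

end Main

end GallaiNumber

theorem gallai_stmt2_general {V : Type*} [Fintype V] (G : SimpleGraph V) (hG : G.Preconnected) :
    ∃ S : Finset V, S.card ≤ min (Fintype.card V) (9 * ((Fintype.card V).sqrt + 1)) ∧
      ∀ (x y : V) (p : G.Walk x y), p.IsPath →
        (∀ (u w : V) (q : G.Walk u w), q.IsPath → q.length ≤ p.length) →
        ∃ s ∈ S, s ∈ p.support := by
  obtain ⟨X, hX, h⟩ := GallaiNumber.hasTransversal_univ hG (Nat.lt_succ_sqrt (Fintype.card V))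
  exact ⟨X, le_min X.card_le_univ hX, fun x y p hp hmax =>
    h x y p ⟨hp, hmax⟩ ⟨x, p.start_mem_support, Set.mem_univ x⟩⟩

/-- Every connected graph `G` on `n ≥ 2` vertices has a set of at most
`5 n^{2/3}` vertices meeting every longest path of `G`. -/
theorem gallai_stmt2 {V : Type*} [Fintype V] (G : SimpleGraph V) (hG : G.Connected)
    (hn : 2 ≤ Fintype.card V) :
    ∃ S : Finset V, (S.card : ℝ) ≤ 5 * (Fintype.card V : ℝ) ^ ((2 : ℝ) / 3) ∧
      ∀ (x y : V) (p : G.Walk x y), p.IsPath →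
        (∀ (u w : V) (q : G.Walk u w), q.IsPath → q.length ≤ p.length) →
        ∃ s ∈ S, s ∈ p.support := by
  obtain ⟨S, hS, h⟩ := gallai_stmt2_general G hG.preconnected
  exact ⟨S, (Nat.cast_le.2 hS).trans (GallaiNumber.min_le_five_mul_rpow _), h⟩
end

section
/- Let M be a connected multigraph, let G be a graph on n vertices such that the family L(M,G) of maximum M-subdivisions in G is pairwise intersecting, let (X,Y) be a G-pretransversal with |X| maximum, and set H := G − X, assumed nonempty. Then for all disjoint sets A, B ⊆ V(H) with s := min(|A|,|B|), there is an A,B-connector in H of size at least s/n^{1/3}. -/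
open SimpleGraph

/-- A multigraph with vertex type `W` and edge type `F`: each edge has an
unordered pair of endpoints (possibly equal, giving a loop). -/
structure Multigraph (W : Type*) (F : Type*) where
  ends : F → Sym2 W

namespace Multigraph

variable {W F : Type*}

/-- Adjacency in a multigraph. -/
def Adj (M : Multigraph W F) (u v : W) : Prop :=
  ∃ e : F, M.ends e = s(u, v)

/-- A multigraph is connected if it is nonempty and any two vertices are joined by a walk. -/
def Connected (M : Multigraph W F) : Prop :=
  Nonempty W ∧ ∀ u v : W, Relation.ReflTransGen M.Adj u v

/-- Delete the edge `e` from the multigraph `M`. -/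
def deleteEdge (M : Multigraph W F) (e : F) : Multigraph W {f : F // f ≠ e} where
  ends f := M.ends f.1

/-- An edge of a (connected) multigraph is a cut-edge if deleting it disconnects
the multigraph. -/
def IsCutEdge (M : Multigraph W F) (e : F) : Prop :=
  ¬ (M.deleteEdge e).Connected

end Multigraph

variable {V W F : Type*}

/-- `Q` is (the subgraph realizing) an `M`-subdivision inside the simple graph `G`:
there is an injective placement `b` of the branch vertices of `M`, and for each edge
`e` of `M` with ends `u e`, `v e` a path (a cycle, if `e` is a loop) of `G` joining
`b (u e)` to `b (v e)`; these paths are internally disjoint from each other and from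
the branch vertices, are pairwise edge-disjoint, and their union is exactly `Q`. -/
def IsSubdivisionIn (M : Multigraph W F) (G : SimpleGraph V) (Q : G.Subgraph) : Prop :=
  ∃ (b : W → V) (u v : F → W) (P : ∀ e : F, G.Walk (b (u e)) (b (v e))),
    Function.Injective b ∧
    (∀ e, M.ends e = s(u e, v e)) ∧
    (∀ e, ∀ h : u e = v e, ((P e).copy rfl (congrArg b h.symm)).IsCycle) ∧
    (∀ e, u e ≠ v e → (P e).IsPath) ∧
    (∀ e, ∀ x ∈ (P e).support, x ∈ Set.range b → x = b (u e) ∨ x = b (v e)) ∧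
    (∀ e e', e ≠ e' → ∀ x, x ∈ (P e).support → x ∈ (P e').support → x ∈ Set.range b) ∧
    (∀ e e', e ≠ e' → ∀ a, a ∈ (P e).edges → a ∉ (P e').edges) ∧
    Q.verts = Set.range b ∪ ⋃ e, {x | x ∈ (P e).support} ∧
    (∀ x y, Q.Adj x y ↔ ∃ e, (P e).toSubgraph.Adj x y)

/-- `Q` is a maximum `M`-subdivision among those contained in the subgraph `H` of `G`
(maximum with respect to the number of edges). -/
def IsMaxSubdivisionIn (M : Multigraph W F) (G : SimpleGraph V) (H Q : G.Subgraph) : Prop :=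
  IsSubdivisionIn M G Q ∧ Q ≤ H ∧
    ∀ R : G.Subgraph, IsSubdivisionIn M G R → R ≤ H →
      R.edgeSet.ncard ≤ Q.edgeSet.ncard

/-- The family `L(M,H)` of maximum `M`-subdivisions in `H` is pairwise intersecting. -/
def PairwiseIntersectingIn (M : Multigraph W F) (G : SimpleGraph V) (H : G.Subgraph) : Prop :=
  ∀ Q R : G.Subgraph, IsMaxSubdivisionIn M G H Q → IsMaxSubdivisionIn M G H R →
    (Q.verts ∩ R.verts).Nonempty

/-- `S` is a transversal of the family `L(M,H)` of maximum `M`-subdivisions in `H`. -/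
def IsTransversalIn (M : Multigraph W F) (G : SimpleGraph V) (H : G.Subgraph)
    (S : Set V) : Prop :=
  ∀ Q : G.Subgraph, IsMaxSubdivisionIn M G H Q → (S ∩ Q.verts).Nonempty

/-- `(X, Y)` is an `H`-pretransversal: `Y ⊆ X ⊆ V(H)`, `n^{1/3}·|Y| ≤ |X|`
(where `n = |V(G)|`), and every maximum `M`-subdivision `Q` in `H` satisfies
`Q ⊆ H − X` or `Q ∩ Y ≠ ∅`. -/
def IsPretransversal [Fintype V] (M : Multigraph W F) (G : SimpleGraph V)
    (H : G.Subgraph) (X Y : Set V) : Prop :=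
  Y ⊆ X ∧ X ⊆ H.verts ∧
    (Fintype.card V : ℝ) ^ ((1 : ℝ) / 3) * (Y.ncard : ℝ) ≤ (X.ncard : ℝ) ∧
    ∀ Q : G.Subgraph, IsMaxSubdivisionIn M G H Q →
      Q ≤ H.deleteVerts X ∨ (Q.verts ∩ Y).Nonempty

/-- An `A,B`-connector of size `k` inside the subgraph `H` of `G`: `k` pairwise
vertex-disjoint paths of `H`, each meeting `A` exactly in its first vertex and
meeting `B` exactly in its last vertex. -/
def IsConnector (G : SimpleGraph V) (H : G.Subgraph) (A B : Set V) (k : ℕ) : Prop :=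
  ∃ (a : Fin k → V) (b : Fin k → V) (p : ∀ i : Fin k, G.Walk (a i) (b i)),
    (∀ i, (p i).IsPath) ∧
    (∀ i, (p i).toSubgraph ≤ H) ∧
    (∀ i, {x | x ∈ (p i).support} ∩ A = {a i}) ∧
    (∀ i, {x | x ∈ (p i).support} ∩ B = {b i}) ∧
    (∀ i j, i ≠ j → ∀ x, x ∈ (p i).support → x ∉ (p j).support)

/-!
Fix a set `S` of fewest vertices separating `A` from `B` in `G − X`, so that Menger's theorem
supplies a connector of size `|S|`. Maximum subdivisions are connected and pairwise intersecting,
so those that avoid `X ∪ S` cannot be reachable from both `A` and `B` in `G − X − S`; say none is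
reachable from `A`, and let `C` be the set of vertices that are. Every maximum subdivision avoiding
`X ∪ S` then avoids `C`, so `(X ∪ C ∪ S, Y ∪ S)` satisfies the covering condition of a
pretransversal. As `C ∪ S` contains `A`, maximality of `X` leaves only the possibility that the
size condition fails, which forces `|A| ≤ n^{1/3} |S|`.
-/

section Walks

variable {G G' : SimpleGraph V} {U U' S : Set V} {a b c : V}

/-- Reachability of `b` from `a` inside the vertex set `U`: some walk of `G` from `a` to `b` has
all its vertices, ends included, in `U`. -/
def JoinedWithin (G : SimpleGraph V) (U : Set V) (a b : V) : Prop :=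
  ∃ p : G.Walk a b, ∀ x ∈ p.support, x ∈ U

namespace JoinedWithin

lemma refl (G : SimpleGraph V) (ha : a ∈ U) : JoinedWithin G U a a :=
  ⟨Walk.nil, by simpa using ha⟩

lemma symm (h : JoinedWithin G U a b) : JoinedWithin G U b a := by
  obtain ⟨p, hp⟩ := h
  exact ⟨p.reverse, by simpa using hp⟩

lemma trans (hab : JoinedWithin G U a b) (hbc : JoinedWithin G U b c) :
    JoinedWithin G U a c := by
  obtain ⟨p, hp⟩ := hab
  obtain ⟨q, hq⟩ := hbc
  exact ⟨p.append q, fun x hx ↦ ((p.mem_support_append_iff q).1 hx).elim (hp x) (hq x)⟩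

lemma mono (hG : G ≤ G') (hU : U ⊆ U') (h : JoinedWithin G U a b) : JoinedWithin G' U' a b := by
  obtain ⟨p, hp⟩ := h
  exact ⟨p.mapLe hG, fun x hx ↦ hU (hp x (by simpa using hx))⟩

lemma left_mem (h : JoinedWithin G U a b) : a ∈ U := by
  obtain ⟨p, hp⟩ := h
  exact hp a p.start_mem_support

lemma right_mem (h : JoinedWithin G U a b) : b ∈ U := h.symm.left_mem

lemma of_adj (hab : G.Adj a b) (ha : a ∈ U) (hb : b ∈ U) : JoinedWithin G U a b :=
  ⟨hab.toWalk, by simp [ha, hb]⟩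

lemma transfer (h : JoinedWithin G U a b) (hG : ∀ x ∈ U, ∀ y ∈ U, G.Adj x y → G'.Adj x y) :
    JoinedWithin G' U a b := by
  obtain ⟨p, hp⟩ := h
  have hedges : ∀ e ∈ p.edges, e ∈ G'.edgeSet := by
    rintro ⟨x, y⟩ hxy
    exact hG x (hp x (p.fst_mem_support_of_mem_edges hxy))
      y (hp y (p.snd_mem_support_of_mem_edges hxy)) (p.adj_of_mem_edges hxy)
  exact ⟨p.transfer G' hedges, by simpa using hp⟩

lemma exists_isPath (h : JoinedWithin G U a b) :
    ∃ p : G.Walk a b, p.IsPath ∧ ∀ x ∈ p.support, x ∈ U := by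
  classical
  obtain ⟨p, hp⟩ := h
  exact ⟨p.bypass, p.bypass_isPath, fun x hx ↦ hp x (p.support_bypass_subset_support hx)⟩

lemma exists_first_mem (h : JoinedWithin G U a b) (hb : b ∈ S) :
    ∃ s ∈ S, JoinedWithin G {x ∈ U | x ∈ S → x = s} a s := by
  obtain ⟨p, hp⟩ := h
  induction p with
  | @nil a =>
    have ha : a ∈ {x ∈ U | x ∈ S → x = a} := ⟨hp a (by simp), fun _ ↦ rfl⟩
    exact ⟨a, hb, refl G ha⟩
  | @cons a v b hav p ih =>
    have haU : a ∈ U := hp a (by simp)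
    by_cases ha : a ∈ S
    · have haS : a ∈ {x ∈ U | x ∈ S → x = a} := ⟨haU, fun _ ↦ rfl⟩
      exact ⟨a, ha, refl G haS⟩
    · obtain ⟨s, hs, hvs⟩ := ih hb fun x hx ↦ hp x (by simp [hx])
      have haS : a ∈ {x ∈ U | x ∈ S → x = s} := ⟨haU, fun ha' ↦ absurd ha' ha⟩
      exact ⟨s, hs, (of_adj hav haS hvs.left_mem).trans hvs⟩

lemma diff_or_exists_mem (S : Set V) (h : JoinedWithin G U a b) :
    JoinedWithin G (U \ S) a b ∨ ∃ s ∈ S, JoinedWithin G U a s := by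
  classical
  obtain ⟨p, hp⟩ := h
  by_cases hS : ∃ s ∈ p.support, s ∈ S
  · obtain ⟨s, hs, hsS⟩ := hS
    exact .inr ⟨s, hsS, p.takeUntil s hs,
      fun x hx ↦ hp x (p.support_takeUntil_subset_support hs hx)⟩
  · push Not at hS
    exact .inl ⟨p, fun x hx ↦ ⟨hp x hx, hS x hx⟩⟩

lemma deleteEdges_or_exists (e : Sym2 V) (h : JoinedWithin G U a b) :
    JoinedWithin (G.deleteEdges {e}) U a b ∨ ∃ x y, s(x, y) = e ∧
      JoinedWithin (G.deleteEdges {e}) U a x ∧ JoinedWithin (G.deleteEdges {e}) U y b := by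
  obtain ⟨p, hp⟩ := h
  induction p with
  | nil => exact .inl (refl _ (hp _ (by simp)))
  | @cons u v b huv p ih =>
    have hu : u ∈ U := hp u (by simp)
    have hv : v ∈ U := hp v (by simp)
    have hvb := ih fun x hx ↦ hp x (by simp [hx])
    by_cases he : s(u, v) = e
    · rcases hvb with hvb | ⟨x, y, hxy, -, hyb⟩
      · exact .inr ⟨u, v, he, refl _ hu, hvb⟩
      · rcases Sym2.mem_iff.1 (he ▸ hxy ▸ Sym2.mem_mk_right x y : y ∈ s(u, v)) with rfl | rfl
        exacts [.inl hyb, .inr ⟨u, y, he, refl _ hu, hyb⟩]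
    · have huv' : JoinedWithin (G.deleteEdges {e}) U u v := of_adj (by simp [huv, he]) hu hv
      rcases hvb with hvb | ⟨x, y, hxy, hvx, hyb⟩
      exacts [.inl (huv'.trans hvb), .inr ⟨x, y, hxy, huv'.trans hvx, hyb⟩]

end JoinedWithin

end Walks

section Menger

variable {G G' : SimpleGraph V} {A B P S R : Set V} {a b x y : V} {k l : ℕ}

/-- `S` meets every walk of `G` from `A` to `B`. The sets `A` and `B` may overlap, and `S` may
meet both. -/
def Separates (G : SimpleGraph V) (A B S : Set V) : Prop :=
  ∀ a ∈ A, ∀ b ∈ B, ¬ JoinedWithin G Sᶜ a b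

lemma Separates.symm (h : Separates G A B S) : Separates G B A S :=
  fun b hb a ha hba ↦ h a ha b hb hba.symm

/-- There are `k` pairwise disjoint walks from `A` to `B`. Walks are recorded only through
pairwise disjoint vertex sets containing them, which makes concatenation a union. -/
def HasLinkage (G : SimpleGraph V) (A B : Set V) (k : ℕ) : Prop :=
  ∃ T : Fin k → Set V, Pairwise (fun i j ↦ Disjoint (T i) (T j)) ∧
    ∀ i, ∃ a ∈ A, ∃ b ∈ B, JoinedWithin G (T i) a b

lemma HasLinkage.of_family {ι : Type*} [Finite ι] (T : ι → Set V)
    (hdisj : Pairwise fun i j ↦ Disjoint (T i) (T j))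
    (hT : ∀ i, ∃ a ∈ A, ∃ b ∈ B, JoinedWithin G (T i) a b) : HasLinkage G A B (Nat.card ι) :=
  ⟨T ∘ (Finite.equivFin ι).symm, hdisj.comp_of_injective (Finite.equivFin ι).symm.injective,
    fun _ ↦ hT _⟩

lemma HasLinkage.mono (hG : G ≤ G') (hl : l ≤ k) (h : HasLinkage G A B k) :
    HasLinkage G' A B l := by
  obtain ⟨T, hdisj, hT⟩ := h
  refine ⟨T ∘ Fin.castLE hl, hdisj.comp_of_injective (Fin.castLE_injective hl), fun i ↦ ?_⟩
  obtain ⟨a, ha, b, hb, hab⟩ := hT (Fin.castLE hl i)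
  exact ⟨a, ha, b, hb, hab.mono hG subset_rfl⟩

lemma JoinedWithin.exists_isPath_inter_eq {U : Set V} (h : JoinedWithin G U a b) (ha : a ∈ A)
    (hb : b ∈ B) : ∃ (a b : V) (p : G.Walk a b), p.IsPath ∧ (∀ x ∈ p.support, x ∈ U) ∧
      {x | x ∈ p.support} ∩ A = {a} ∧ {x | x ∈ p.support} ∩ B = {b} := by
  obtain ⟨b', hb', hab'⟩ := h.exists_first_mem hb
  obtain ⟨a', ha', hba'⟩ := hab'.symm.exists_first_mem ha
  obtain ⟨p, hp, hpU⟩ := hba'.symm.exists_isPath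
  refine ⟨a', b', p, hp, fun x hx ↦ (hpU x hx).1.1, ?_, ?_⟩
  · exact Set.eq_singleton_iff_unique_mem.2
      ⟨⟨p.start_mem_support, ha'⟩, fun x hx ↦ (hpU x hx.1).2 hx.2⟩
  · exact Set.eq_singleton_iff_unique_mem.2
      ⟨⟨p.end_mem_support, hb'⟩, fun x hx ↦ (hpU x hx.1).1.2 hx.2⟩

lemma HasLinkage.isConnector_top (h : HasLinkage G A B k) : IsConnector G ⊤ A B k := by
  obtain ⟨T, hdisj, hT⟩ := h
  choose a₀ ha₀ b₀ hb₀ hab₀ using hT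
  choose a b p hp hpT hpA hpB using fun i ↦ (hab₀ i).exists_isPath_inter_eq (ha₀ i) (hb₀ i)
  exact ⟨a, b, p, hp, fun _ ↦ le_top, hpA, hpB, fun i j hij x hxi hxj ↦
    Set.disjoint_left.1 (hdisj hij) (hpT i x hxi) (hpT j x hxj)⟩

/-- `T` describes a system of pairwise disjoint paths from `A` to the vertices of `P`, one for
each, that meet `P` only in their ends: for `v ∈ P`, the set `T v` is the vertex set of the path
ending in `v`, and `T v` is irrelevant for `v ∉ P`. -/
structure IsLinkageOnto (G : SimpleGraph V) (A P : Set V) (T : V → Set V) : Prop where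
  mem_self : ∀ v ∈ P, v ∈ T v
  pairwiseDisjoint : P.PairwiseDisjoint T
  exists_joinedWithin : ∀ v ∈ P, ∀ z ∈ T v, ∃ a ∈ A,
    JoinedWithin G {x ∈ T v | x ∈ P → x = z} a z

lemma HasLinkage.exists_isLinkageOnto [Finite V] (h : HasLinkage G A P P.ncard) :
    ∃ T, IsLinkageOnto G A P T := by
  classical
  obtain ⟨a, b, p, hp, -, hpA, hpP, hdisj⟩ := h.isConnector_top
  have hbP : ∀ i, b i ∈ P := fun i ↦ ((hpP i).ge rfl).2
  have hinj : Function.Injective fun i ↦ (⟨b i, hbP i⟩ : P) := fun i j hij ↦ by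
    by_contra hne
    have hbij : b i = b j := congrArg Subtype.val hij
    exact hdisj i j hne (b j) (hbij ▸ (p i).end_mem_support) (p j).end_mem_support
  have hsurj := (hinj.bijective_of_nat_card_le (by simp [Nat.card_coe_set_eq])).surjective
  refine ⟨fun v ↦ {z | ∃ i, b i = v ∧ z ∈ (p i).support}, fun v hv ↦ ?_, ?_, ?_⟩
  · obtain ⟨i, hi⟩ := hsurj ⟨v, hv⟩
    obtain rfl : b i = v := congrArg Subtype.val hi
    exact ⟨i, rfl, (p i).end_mem_support⟩
  · refine fun v _ w _ hvw ↦ Set.disjoint_left.2 ?_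
    rintro z ⟨i, rfl, hzi⟩ ⟨j, rfl, hzj⟩
    exact hdisj i j (fun hij ↦ hvw (hij ▸ rfl)) z hzi hzj
  · rintro v - z ⟨i, rfl, hz⟩
    refine ⟨a i, ((hpA i).ge rfl).2, (p i).takeUntil z hz, fun x hx ↦ ?_⟩
    have hxp : x ∈ (p i).support := (p i).support_takeUntil_subset_support hz hx
    refine ⟨⟨i, rfl, hxp⟩, fun hxP ↦ ?_⟩
    obtain rfl : x = b i := (hpP i).le ⟨hxp, hxP⟩
    by_contra hne
    exact Walk.endpoint_notMem_support_takeUntil (hp i) hz hne hx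

namespace IsLinkageOnto

variable {Q : Set V} {T T' : V → Set V} {v w z : V}

lemma eq_of_mem (hT : IsLinkageOnto G A P T) (hv : v ∈ P) (hz : z ∈ T v) (hzP : z ∈ P) :
    z = v := by
  by_contra hne
  exact Set.disjoint_left.1 (hT.pairwiseDisjoint hzP hv hne) (hT.mem_self z hzP) hz

lemma mem_of_separates (hT : IsLinkageOnto G A P T) (hT' : IsLinkageOnto G B Q T')
    (hS : Separates G A B S) (hSP : S ⊆ P) (hSQ : S ⊆ Q) (hv : v ∈ P) (hw : w ∈ Q)
    (hz : z ∈ T v) (hz' : z ∈ T' w) : z ∈ S := by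
  by_contra hzS
  obtain ⟨a, ha, haz⟩ := hT.exists_joinedWithin v hv z hz
  obtain ⟨b, hb, hbz⟩ := hT'.exists_joinedWithin w hw z hz'
  have hvS : {x ∈ T v | x ∈ P → x = z} ⊆ Sᶜ := by
    rintro x ⟨-, hxz⟩ hxS
    exact hzS (hxz (hSP hxS) ▸ hxS)
  have hwS : {x ∈ T' w | x ∈ Q → x = z} ⊆ Sᶜ := by
    rintro x ⟨-, hxz⟩ hxS
    exact hzS (hxz (hSQ hxS) ▸ hxS)
  exact hS a ha b hb ((haz.mono le_rfl hvS).trans (hbz.mono le_rfl hwS).symm)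

lemma disjoint_of_ne (hT : IsLinkageOnto G A P T) (hT' : IsLinkageOnto G B Q T')
    (hS : Separates G A B S) (hSP : S ⊆ P) (hSQ : S ⊆ Q) (hv : v ∈ P) (hw : w ∈ Q)
    (hvw : v ∈ S → v ≠ w) : Disjoint (T v) (T' w) := by
  refine Set.disjoint_left.2 fun z hz hz' ↦ ?_
  have hzS : z ∈ S := hT.mem_of_separates hT' hS hSP hSQ hv hw hz hz'
  obtain rfl : z = v := hT.eq_of_mem hv hz (hSP hzS)
  exact hvw hzS (hT'.eq_of_mem hw hz' (hSQ hzS))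

lemma exists_joinedWithin_self (hT : IsLinkageOnto G A P T) (hv : v ∈ P) :
    ∃ a ∈ A, JoinedWithin G (T v) a v := by
  obtain ⟨a, ha, hav⟩ := hT.exists_joinedWithin v hv v (hT.mem_self v hv)
  exact ⟨a, ha, hav.mono le_rfl (Set.sep_subset _ _)⟩

lemma hasLinkage_of_adj [Finite V] (hT : IsLinkageOnto G A (insert x S) T)
    (hT' : IsLinkageOnto G B (insert y S) T') (hG : G ≤ G') (hxy : G'.Adj x y)
    (hS : Separates G A B S) (hx : x ∉ S) (hy : y ∉ S) :
    HasLinkage G' A B (insert x S).ncard := by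
  classical
  let σ : Equiv.Perm V := Equiv.swap x y
  have hσx : σ x = y := Equiv.swap_apply_left x y
  have hσS : ∀ v ∈ S, σ v = v := fun v hv ↦
    Equiv.swap_apply_of_ne_of_ne (ne_of_mem_of_not_mem hv hx) (ne_of_mem_of_not_mem hv hy)
  have hσ : ∀ v ∈ insert x S, σ v ∈ insert y S := by
    rintro v (rfl | hv)
    exacts [.inl hσx, .inr ((hσS v hv).symm ▸ hv)]
  have hcross : ∀ v ∈ insert x S, ∀ w ∈ insert x S, v ≠ w → Disjoint (T v) (T' (σ w)) :=
    fun v hv w hw hvw ↦ hT.disjoint_of_ne hT' hS (Set.subset_insert x S) (Set.subset_insert y S)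
      hv (hσ w hw) fun hvS hvσ ↦ hvw (σ.injective ((hσS v hvS).trans hvσ))
  rw [← Nat.card_coe_set_eq]
  refine HasLinkage.of_family (fun v : (insert x S : Set V) ↦ T v ∪ T' (σ v)) ?_ ?_
  · rintro ⟨v, hv⟩ ⟨w, hw⟩ hne
    have hvw : v ≠ w := fun h ↦ hne (Subtype.ext h)
    exact Set.disjoint_union_left.2
      ⟨Set.disjoint_union_right.2 ⟨hT.pairwiseDisjoint hv hw hvw, hcross v hv w hw hvw⟩,
        Set.disjoint_union_right.2 ⟨(hcross w hw v hv hvw.symm).symm,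
          hT'.pairwiseDisjoint (hσ v hv) (hσ w hw) (σ.injective.ne hvw)⟩⟩
  · rintro ⟨v, hv⟩
    obtain ⟨a, ha, hav⟩ := hT.exists_joinedWithin_self hv
    obtain ⟨b, hb, hbv⟩ := hT'.exists_joinedWithin_self (hσ v hv)
    have hav' := hav.mono hG (Set.subset_union_left (t := T' (σ v)))
    have hbv' := hbv.mono hG (Set.subset_union_right (s := T v))
    have hvσ : JoinedWithin G' (T v ∪ T' (σ v)) v (σ v) := by
      rcases hv with rfl | hv
      · exact .of_adj (hσx.symm ▸ hxy) hav'.right_mem hbv'.right_mem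
      · rw [hσS v hv] at hav' ⊢
        exact .refl G' hav'.right_mem
    exact ⟨a, ha, b, hb, hav'.trans (hvσ.trans hbv'.symm)⟩

end IsLinkageOnto

lemma Separates.exists_edge_of_not_separates (e : Sym2 V) (hS : Separates (G.deleteEdges {e}) A B S)
    (hGS : ¬ Separates G A B S) : ∃ x y, s(x, y) = e ∧
      (∃ a ∈ A, JoinedWithin (G.deleteEdges {e}) Sᶜ a x) ∧
      ∃ b ∈ B, JoinedWithin (G.deleteEdges {e}) Sᶜ y b := by
  simp only [Separates, not_forall, not_not] at hGS
  obtain ⟨a, ha, b, hb, hab⟩ := hGS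
  obtain hab | ⟨x, y, hxy, hax, hyb⟩ := hab.deleteEdges_or_exists e
  · exact absurd hab (hS a ha b hb)
  · exact ⟨x, y, hxy, ⟨a, ha, hax⟩, b, hb, hyb⟩

lemma Separates.insert_of_deleteEdges (hS : Separates (G.deleteEdges {s(x, y)}) A B S) :
    Separates G A B (insert x S) := by
  intro a ha b hb hab
  refine hS a ha b hb <|
    (hab.transfer fun u hu v hv huv ↦ ?_).mono le_rfl
      (Set.compl_subset_compl.2 (Set.subset_insert x S))
  have hux : u ≠ x := fun h ↦ hu (.inl h)
  have hvx : v ≠ x := fun h ↦ hv (.inl h)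
  simp [huv, hux, hvx]

lemma Separates.of_deleteEdges (hS : Separates (G.deleteEdges {s(x, y)}) A B S)
    (hy : ∃ b ∈ B, JoinedWithin (G.deleteEdges {s(x, y)}) Sᶜ y b)
    (hR : Separates (G.deleteEdges {s(x, y)}) A (insert x S) R) : Separates G A B R := by
  intro a ha b hb hab
  have avoid : ∀ z, JoinedWithin (G.deleteEdges {s(x, y)}) Rᶜ a z →
      JoinedWithin (G.deleteEdges {s(x, y)}) Sᶜ a z := by
    intro z haz
    rcases haz.diff_or_exists_mem S with haz | ⟨s, hs, has⟩
    exacts [haz.mono le_rfl fun _ hx ↦ hx.2, absurd has (hR a ha s (.inr hs))]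
  rcases hab.deleteEdges_or_exists s(x, y) with hab | ⟨x', y', hxy, hax, -⟩
  · exact hS a ha b hb (avoid b hab)
  · rcases Sym2.mem_iff.1 (hxy ▸ Sym2.mem_mk_left x' y' : x' ∈ s(x, y)) with rfl | rfl
    · exact hR a ha x' (.inl rfl) hax
    · obtain ⟨b', hb', hyb'⟩ := hy
      exact hS a ha b' hb' ((avoid x' hax).trans hyb')

lemma Separates.exists_ncard_le_or_hasLinkage [Finite V]
    (hS : Separates (G.deleteEdges {s(x, y)}) A B S) (hx : x ∉ S)
    (hy : ∃ b ∈ B, JoinedWithin (G.deleteEdges {s(x, y)}) Sᶜ y b)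
    (hmenger : ∃ R, Separates (G.deleteEdges {s(x, y)}) A (insert x S) R ∧
      HasLinkage (G.deleteEdges {s(x, y)}) A (insert x S) R.ncard) :
    (∃ R, Separates G A B R ∧ R.ncard ≤ S.ncard) ∨
      HasLinkage (G.deleteEdges {s(x, y)}) A (insert x S) (insert x S).ncard := by
  obtain ⟨R, hR, hlink⟩ := hmenger
  rcases le_or_gt R.ncard S.ncard with hRS | hSR
  · exact .inl ⟨R, hS.of_deleteEdges hy hR, hRS⟩
  · exact .inr (hlink.mono le_rfl (by rwa [Set.ncard_insert_of_notMem hx]))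

lemma exists_separates_hasLinkage_bot [Finite V] (A B : Set V) :
    ∃ S, Separates ⊥ A B S ∧ HasLinkage ⊥ A B S.ncard := by
  refine ⟨A ∩ B, ?_, ?_⟩
  · rintro a ha b hb ⟨p, hp⟩
    cases p with
    | nil => exact hp a (by simp) ⟨ha, hb⟩
    | cons h _ => exact h
  · rw [← Nat.card_coe_set_eq]
    exact .of_family (fun v : (A ∩ B : Set V) ↦ {(v : V)})
      (fun v w hvw ↦ Set.disjoint_singleton.2 (Subtype.coe_ne_coe.2 hvw))
      fun v ↦ ⟨v, v.2.1, v, v.2.2, .refl ⊥ rfl⟩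

/-- **Menger's theorem** for vertex sets of a finite graph. If the separator `S` of the graph
without the edge `xy` fails to separate in `G`, then `A` is linked onto `S + x` and `B` onto
`S + y`, unless there is a separator of `G` no larger than `S`; the two linkages are glued along
`S` and `xy`. -/
theorem exists_separates_hasLinkage [Finite V] (G : SimpleGraph V) (A B : Set V) :
    ∃ S, Separates G A B S ∧ HasLinkage G A B S.ncard := by
  induction G using WellFoundedLT.induction generalizing A B with
  | ind G ih =>
  rcases G.edgeSet.eq_empty_or_nonempty with hG | ⟨e, he⟩
  · rw [edgeSet_eq_empty.1 hG]
    exact exists_separates_hasLinkage_bot A B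
  have hle : G.deleteEdges {e} ≤ G := deleteEdges_le {e}
  have hlt : G.deleteEdges {e} < G := hle.lt_of_ne (by simpa using he)
  obtain ⟨S, hS, hlink⟩ := ih _ hlt A B
  by_cases hGS : Separates G A B S
  · exact ⟨S, hGS, hlink.mono hle le_rfl⟩
  obtain ⟨x, y, rfl, hx, hy⟩ := hS.exists_edge_of_not_separates e hGS
  have hxS : x ∉ S := hx.elim fun _ h ↦ h.2.right_mem
  have hyS : y ∉ S := hy.elim fun _ h ↦ h.2.left_mem
  rcases hS.exists_ncard_le_or_hasLinkage hxS hy (ih _ hlt A _) with ⟨R, hR, hRS⟩ | hA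
  · exact ⟨R, hR, hlink.mono hle hRS⟩
  have hB : (∃ R, Separates G B A R ∧ R.ncard ≤ S.ncard) ∨
      HasLinkage (G.deleteEdges {s(x, y)}) B (insert y S) (insert y S).ncard := by
    rw [Sym2.eq_swap] at hS hx hlt ⊢
    exact hS.symm.exists_ncard_le_or_hasLinkage hyS
      (hx.imp fun _ h ↦ ⟨h.1, h.2.symm⟩) (ih _ hlt B _)
  rcases hB with ⟨R, hR, hRS⟩ | hB
  · exact ⟨R, hR.symm, hlink.mono hle hRS⟩
  obtain ⟨T, hT⟩ := hA.exists_isLinkageOnto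
  obtain ⟨T', hT'⟩ := hB.exists_isLinkageOnto
  exact ⟨insert x S, hS.insert_of_deleteEdges, hT.hasLinkage_of_adj hT' hle he hS hxS hyS⟩

end Menger

section Connectors

variable {G : SimpleGraph V} {H : G.Subgraph} {A B : Set V} {k : ℕ} {u v : V}

lemma toSubgraph_mapLe_spanningCoe_le (p : H.spanningCoe.Walk u v) (hu : u ∈ H.verts) :
    (p.mapLe H.spanningCoe_le).toSubgraph ≤ H := by
  induction p with
  | nil => simpa using hu
  | @cons u v w huv p ih =>
    have huv' : H.Adj u v := huv
    exact sup_le (subgraphOfAdj_le_of_adj H huv') (ih huv'.snd_mem)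

lemma IsConnector.of_spanningCoe (hA : A ⊆ H.verts) (h : IsConnector H.spanningCoe ⊤ A B k) :
    IsConnector G H A B k := by
  obtain ⟨a, b, p, hp, -, hpA, hpB, hdisj⟩ := h
  exact ⟨a, b, fun i ↦ (p i).mapLe H.spanningCoe_le, fun i ↦ (Walk.isPath_mapLe _).2 (hp i),
    fun i ↦ toSubgraph_mapLe_spanningCoe_le (p i) (hA ((hpA i).ge rfl).2),
    fun i ↦ by simpa using hpA i, fun i ↦ by simpa using hpB i,
    fun i j hij ↦ by simpa using hdisj i j hij⟩

end Connectors

section Subdivisions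

variable {M : Multigraph W F} {G : SimpleGraph V} {Q : G.Subgraph}

lemma connected_of_reachable_spanningCoe (hne : Q.verts.Nonempty)
    (h : ∀ x ∈ Q.verts, ∀ y ∈ Q.verts, Q.spanningCoe.Reachable x y) : Q.Connected :=
  Q.connected_iff_forall_exists_walk_subgraph.2 ⟨hne, fun {x y} hx hy ↦
    (h x hx y hy).elim fun p ↦ ⟨p.mapLe Q.spanningCoe_le, toSubgraph_mapLe_spanningCoe_le p hx⟩⟩

theorem IsSubdivisionIn.connected (hM : M.Connected) (hQ : IsSubdivisionIn M G Q) :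
    Q.Connected := by
  classical
  obtain ⟨b, u, v, P, -, hends, -, -, -, -, -, hverts, hadj⟩ := hQ
  have hpath : ∀ e, ∀ x ∈ (P e).support, Q.spanningCoe.Reachable (b (u e)) x := fun e x hx ↦ by
    refine ⟨((P e).takeUntil x hx).transfer Q.spanningCoe fun f hf ↦ ?_⟩
    induction f with
    | h y z =>
      have hf' : s(y, z) ∈ (P e).edges := (P e).edges_takeUntil_subset_edges hx hf
      exact (hadj y z).2 ⟨e, (P e).mem_edges_toSubgraph.2 hf'⟩
  have hedge : ∀ w w', M.Adj w w' → Q.spanningCoe.Reachable (b w) (b w') := by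
    rintro w w' ⟨e, he⟩
    have huv := hpath e _ (P e).end_mem_support
    rcases Sym2.eq_iff.1 ((hends e).symm.trans he) with ⟨rfl, rfl⟩ | ⟨rfl, rfl⟩
    exacts [huv, huv.symm]
  have hbranch : ∀ w w', Q.spanningCoe.Reachable (b w) (b w') := fun w w' ↦
    (hM.2 w w').head_induction_on (.refl _) fun h _ ih ↦ (hedge _ _ h).trans ih
  have hto : ∀ x ∈ Q.verts, ∃ w, Q.spanningCoe.Reachable (b w) x := fun x hx ↦ by
    rw [hverts, Set.mem_union, Set.mem_iUnion] at hx
    rcases hx with ⟨w, rfl⟩ | ⟨e, hx⟩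
    exacts [⟨w, .refl _⟩, ⟨u e, hpath e x hx⟩]
  obtain ⟨w₀⟩ := hM.1
  refine connected_of_reachable_spanningCoe ⟨b w₀, hverts ▸ .inl ⟨w₀, rfl⟩⟩ fun x hx y hy ↦ ?_
  obtain ⟨w, hwx⟩ := hto x hx
  obtain ⟨w', hwy⟩ := hto y hy
  exact hwx.symm.trans ((hbranch w w').trans hwy)

end Subdivisions

section Pretransversals

variable {G : SimpleGraph V} {A B S X Y Z : Set V} {𝓠 : Set G.Subgraph} {c : ℝ}

/-- `(X, Y)` is a pretransversal with ratio `c` of the family `𝓠` of subgraphs: `Y ⊆ X`,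
`c |Y| ≤ |X|`, and every member of `𝓠` avoids `X` or meets `Y`. The pretransversals of a graph on
`n` vertices are the case `c = n^{1/3}`, with `𝓠` the family of its maximum `M`-subdivisions. -/
def IsFamilyPretransversal (𝓠 : Set G.Subgraph) (c : ℝ) (X Y : Set V) : Prop :=
  Y ⊆ X ∧ c * Y.ncard ≤ X.ncard ∧ ∀ Q ∈ 𝓠, Disjoint Q.verts X ∨ (Q.verts ∩ Y).Nonempty

lemma le_top_deleteVerts_iff {Q : G.Subgraph} :
    Q ≤ (⊤ : G.Subgraph).deleteVerts X ↔ Disjoint Q.verts X := by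
  refine ⟨fun h ↦ Set.disjoint_left.2 fun z hz ↦ (h.1 hz).2, fun h ↦
    ⟨fun z hz ↦ ⟨trivial, Set.disjoint_left.1 h hz⟩, fun x y hxy ↦ ?_⟩⟩
  exact Subgraph.deleteVerts_adj.2 ⟨trivial, Set.disjoint_left.1 h hxy.fst_mem, trivial,
    Set.disjoint_left.1 h hxy.snd_mem, hxy.adj_sub⟩

lemma isPretransversal_top_iff [Fintype V] {M : Multigraph W F} :
    IsPretransversal M G ⊤ X Y ↔
      IsFamilyPretransversal {Q | IsMaxSubdivisionIn M G ⊤ Q}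
        ((Fintype.card V : ℝ) ^ ((1 : ℝ) / 3)) X Y := by
  simp [IsPretransversal, IsFamilyPretransversal, le_top_deleteVerts_iff]

lemma IsFamilyPretransversal.union [Finite V] (h : IsFamilyPretransversal 𝓠 c X Y) (hc : 0 ≤ c)
    (hSZ : S ⊆ Z) (hcard : c * S.ncard ≤ (Z \ X).ncard)
    (hZ : ∀ Q ∈ 𝓠, Disjoint Q.verts (X ∪ S) → Disjoint Q.verts Z) :
    IsFamilyPretransversal 𝓠 c (X ∪ Z) (Y ∪ S) := by
  obtain ⟨hYX, hcXY, hQ⟩ := h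
  refine ⟨Set.union_subset_union hYX hSZ, ?_, fun Q hQ𝓠 ↦ ?_⟩
  · calc c * (Y ∪ S).ncard ≤ c * (Y.ncard + S.ncard) := by
          gcongr
          exact_mod_cast Set.ncard_union_le Y S
      _ ≤ X.ncard + (Z \ X).ncard := by linarith
      _ = (X ∪ Z).ncard := by
          rw [← Set.union_sdiff_self, Set.ncard_union_eq Set.disjoint_sdiff_right, Nat.cast_add]
  · rw [Set.disjoint_union_right, Set.inter_union_distrib_left, Set.union_nonempty]
    rcases hQ Q hQ𝓠 with hQX | hQY
    · by_cases hQS : Disjoint Q.verts S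
      · exact .inl ⟨hQX, hZ Q hQ𝓠 (Set.disjoint_union_right.2 ⟨hQX, hQS⟩)⟩
      · exact .inr (.inr (Set.not_disjoint_iff_nonempty_inter.1 hQS))
    · exact .inr (.inl hQY)

lemma ncard_le_of_maximal_of_not_joinedWithin [Finite V] (hc : 0 ≤ c)
    (hX : Maximal (fun X ↦ ∃ Y, IsFamilyPretransversal 𝓠 c X Y) X) (hAX : Disjoint A X)
    (hA : ∀ Q ∈ 𝓠, Disjoint Q.verts (X ∪ S) →
      ∀ a ∈ A, ∀ z ∈ Q.verts, ¬ JoinedWithin G (X ∪ S)ᶜ a z) :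
    (A.ncard : ℝ) ≤ c * S.ncard := by
  by_contra! hlt
  let Z : Set V := S ∪ {z | ∃ a ∈ A, JoinedWithin G (X ∪ S)ᶜ a z}
  have hAZ : A ⊆ Z \ X := by
    refine fun a ha ↦ ⟨or_iff_not_imp_left.2 fun haS ↦ ?_, Set.disjoint_left.1 hAX ha⟩
    exact ⟨a, ha, .refl G fun h ↦ h.elim (Set.disjoint_left.1 hAX ha) haS⟩
  have hcard : c * S.ncard ≤ (Z \ X).ncard :=
    hlt.le.trans (by exact_mod_cast Set.ncard_le_ncard hAZ)
  have hQZ : ∀ Q ∈ 𝓠, Disjoint Q.verts (X ∪ S) → Disjoint Q.verts Z := by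
    refine fun Q hQ hQXS ↦ Set.disjoint_union_right.2 ⟨hQXS.mono_right Set.subset_union_right, ?_⟩
    exact Set.disjoint_left.2 fun z hz ⟨a, ha, haz⟩ ↦ hA Q hQ hQXS a ha z hz haz
  obtain ⟨Y, hXY⟩ := hX.prop
  have hXZ : X ∪ Z ⊆ X :=
    hX.le_of_ge ⟨Y ∪ S, hXY.union hc Set.subset_union_left hcard hQZ⟩ Set.subset_union_left
  have hA0 : A = ∅ := Set.eq_empty_of_forall_notMem fun a ha ↦ (hAZ ha).2 (hXZ (.inr (hAZ ha).1))
  rw [hA0, Set.ncard_empty, Nat.cast_zero] at hlt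
  exact hlt.not_ge (by positivity)

lemma joinedWithin_of_preconnected {Q : G.Subgraph} {U : Set V} {x y : V} (hQ : Q.Preconnected)
    (hQU : Q.verts ⊆ U) (hx : x ∈ Q.verts) (hy : y ∈ Q.verts) : JoinedWithin G U x y := by
  obtain ⟨p, hp⟩ := Q.preconnected_iff_forall_exists_walk_subgraph.1 hQ hx hy
  exact ⟨p, fun z hz ↦ hQU (hp.1 (p.mem_verts_toSubgraph.2 hz))⟩

theorem min_ncard_le_mul_ncard_of_separates [Finite V] (hc : 0 ≤ c)
    (hconn : ∀ Q ∈ 𝓠, Q.Preconnected)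
    (hpi : ∀ Q ∈ 𝓠, ∀ R ∈ 𝓠, (Q.verts ∩ R.verts).Nonempty)
    (hX : Maximal (fun X ↦ ∃ Y, IsFamilyPretransversal 𝓠 c X Y) X)
    (hAX : Disjoint A X) (hBX : Disjoint B X) (hS : Separates G A B (X ∪ S)) :
    min (A.ncard : ℝ) B.ncard ≤ c * S.ncard := by
  have hjoin : ∀ Q ∈ 𝓠, Disjoint Q.verts (X ∪ S) → ∀ x ∈ Q.verts, ∀ y ∈ Q.verts,
      JoinedWithin G (X ∪ S)ᶜ x y := fun Q hQ hQS _ hx _ hy ↦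
    joinedWithin_of_preconnected (hconn Q hQ) (Set.subset_compl_iff_disjoint_right.2 hQS) hx hy
  rw [min_le_iff, or_iff_not_imp_left]
  intro hlt
  obtain ⟨Q, hQ, hQS, a, ha, z, hz, haz⟩ : ∃ Q ∈ 𝓠, Disjoint Q.verts (X ∪ S) ∧
      ∃ a ∈ A, ∃ z ∈ Q.verts, JoinedWithin G (X ∪ S)ᶜ a z := by
    contrapose! hlt
    exact ncard_le_of_maximal_of_not_joinedWithin hc hX hAX hlt
  refine ncard_le_of_maximal_of_not_joinedWithin hc hX hBX fun R hR hRS b hb w hw hbw ↦ ?_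
  obtain ⟨t, htQ, htR⟩ := hpi Q hQ R hR
  have hzw : JoinedWithin G (X ∪ S)ᶜ z w :=
    (hjoin Q hQ hQS z hz t htQ).trans (hjoin R hR hRS t htR w hw)
  exact hS a ha b hb ((haz.trans hzw).trans hbw.symm)

lemma Separates.union_of_deleteVerts
    (hS : Separates ((⊤ : G.Subgraph).deleteVerts X).spanningCoe A B S) :
    Separates G A B (X ∪ S) := by
  intro a ha b hb hab
  refine hS a ha b hb ((hab.transfer fun x hx y hy hxy ↦ ?_).mono le_rfl
    (Set.compl_subset_compl.2 Set.subset_union_right))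
  exact Subgraph.deleteVerts_adj.2
    ⟨trivial, fun h ↦ hx (.inl h), trivial, fun h ↦ hy (.inl h), hxy⟩

end Pretransversals

theorem gallai_stmt6_general [Fintype V] {M : Multigraph W F} (hM : M.Connected)
    {G : SimpleGraph V} (hpi : PairwiseIntersectingIn M G ⊤) {X : Set V}
    (hX : Maximal (fun X ↦ ∃ Y, IsPretransversal M G ⊤ X Y) X) {A B : Set V}
    (hA : A ⊆ ((⊤ : G.Subgraph).deleteVerts X).verts)
    (hB : B ⊆ ((⊤ : G.Subgraph).deleteVerts X).verts) :
    ∃ k : ℕ, IsConnector G ((⊤ : G.Subgraph).deleteVerts X) A B k ∧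
      (min A.ncard B.ncard : ℝ) / (Fintype.card V : ℝ) ^ ((1 : ℝ) / 3) ≤ (k : ℝ) := by
  obtain ⟨S, hS, hlink⟩ :=
    exists_separates_hasLinkage ((⊤ : G.Subgraph).deleteVerts X).spanningCoe A B
  refine ⟨S.ncard, hlink.isConnector_top.of_spanningCoe hA,
    div_le_of_le_mul₀ (by positivity) (by positivity) ?_⟩
  simp only [isPretransversal_top_iff] at hX
  rw [mul_comm]
  exact min_ncard_le_mul_ncard_of_separates (by positivity)
    (fun Q hQ ↦ (hQ.1.connected hM).preconnected) (fun Q hQ R hR ↦ hpi Q R hQ hR) hX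
    (Set.disjoint_left.2 fun a ha ↦ (hA ha).2) (Set.disjoint_left.2 fun b hb ↦ (hB hb).2)
    hS.union_of_deleteVerts

/-- Suppose `L(M,G)` is pairwise intersecting, `(X,Y)` is a
`G`-pretransversal with `|X|` maximum, and `H := G − X` is nonempty. Then for all
disjoint `A, B ⊆ V(H)` there is an `A,B`-connector in `H` of size at least
`min(|A|,|B|) / n^{1/3}`. -/
theorem gallai_stmt6 {V W F : Type*} [Fintype V] [Fintype W] [Fintype F]
    (M : Multigraph W F) (hM : M.Connected) (G : SimpleGraph V)
    (hpi : PairwiseIntersectingIn M G ⊤)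
    (X Y : Set V) (hXY : IsPretransversal M G ⊤ X Y)
    (hmax : ∀ X' Y' : Set V, IsPretransversal M G ⊤ X' Y' → X'.ncard ≤ X.ncard)
    (H : SimpleGraph.Subgraph G) (hH : H = (⊤ : G.Subgraph).deleteVerts X)
    (hne : H.verts.Nonempty)
    (A B : Set V) (hA : A ⊆ H.verts) (hB : B ⊆ H.verts) (hAB : Disjoint A B) :
    ∃ k : ℕ, IsConnector G H A B k ∧
      (min A.ncard B.ncard : ℝ) / (Fintype.card V : ℝ) ^ ((1 : ℝ) / 3) ≤ (k : ℝ) := by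
  subst hH
  exact gallai_stmt6_general hM hpi ⟨⟨Y, hXY⟩, fun X' ⟨Y', hXY'⟩ hXX' ↦
    (Set.eq_of_subset_of_ncard_le hXX' (hmax X' Y' hXY')).ge⟩ hA hB
end
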